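/- arXiv:1807.05869 — 6 statements merged into one kernel-verified Lean document; each statement's English description precedes it below -/
import Mathlib

section
/- Let A be a graded Artinian algebra over a field k and let ℓ ∈ m_A be a homogeneous element. Then the Jordan type P_ℓ of multiplication by ℓ satisfies P_ℓ ≤ H(A)^∨ in the dominance order on partitions of dim_k A. -/
/-! Write `V_N = ⨆_{i ≥ N} A_i` and let `f` be multiplication by `ℓ`, so that `f V_N ⊆ V_{N+1}`.

The key estimate is `rank (f ^ #S) ≤ ∑_{e ∉ S} dim A_e` for every finite set `S` of degrees
(`finrank_range_pow_le`). It follows by sweeping through the degrees `N = 0, 1, 2, …`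
while maintaining an inclusion `range (f ^ #{e ∈ S | e < N}) ⊆ X + V_N` with
`dim X ≤ ∑_{e < N, e ∉ S} dim A_e`: in a degree `N ∉ S` one enlarges `X` by `A_N`, and in a degree
`N ∈ S` one applies `f` once more.

Given `i`, take `S = {e | dim A_e > i}` and `j = #S`. The `i` largest parts of `P` have sum at most
`i * j + ∑_p (p - j) = i * j + rank (f ^ j)`, and by the estimate this is at most
`i * #S + ∑_{e ∉ S} dim A_e = ∑_e min (dim A_e) i`, the sum of the first `i` parts of `H(A)^∨`. -/

/-- `P` is the Jordan type (multiset of Jordan block sizes) of the `k`-linear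
endomorphism `f`, characterized by the ranks of the powers of `f`. -/
def IsJordanTypeOf {k A : Type*} [Field k] [AddCommGroup A] [Module k A]
    (f : A →ₗ[k] A) (P : Multiset ℕ) : Prop :=
  (∀ p ∈ P, 0 < p) ∧
  ∀ j : ℕ, Module.finrank k (LinearMap.range (f ^ j)) = (P.map (fun p => p - j)).sum

/-- Dominance order on partitions (as multisets of parts): `DomLE P Q` means
`P ≤ Q` in the dominance order. -/
def DomLE (P Q : Multiset ℕ) : Prop :=
  P.sum = Q.sum ∧
  ∀ i : ℕ, ((P.sort (· ≥ ·)).take i).sum ≤ ((Q.sort (· ≥ ·)).take i).sum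

/-- The conjugate partition of a Hilbert function `H` (whose values are bounded
by `n`): its `i`-th part (for `1 ≤ i ≤ n`) is `#{d | H d ≥ i}`; zero parts are
discarded. -/
noncomputable def conjHilb (H : ℕ → ℕ) (n : ℕ) : Multiset ℕ :=
  ((Multiset.range n).map (fun i => Set.ncard {d : ℕ | i + 1 ≤ H d})).filter (fun c => 0 < c)

/-- A bound for the sum of `i` parts of a list of naturals through the truncated sum that computes
the rank of the `j`-th power. -/
lemma sum_take_le_mul_add_sum_tsub (L : List ℕ) (i j : ℕ) :
    (L.take i).sum ≤ i * j + (L.map (fun p => p - j)).sum := by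
  induction L generalizing i with
  | nil => simp
  | cons a L ih =>
    cases i with
    | zero => simp
    | succ i =>
      have h := ih i
      simp only [List.take_succ_cons, List.sum_cons, List.map_cons, Nat.succ_mul]
      omega

lemma sum_take_le_sum_take_filter_pos (L : List ℕ) (i : ℕ) :
    (L.take i).sum ≤ ((L.filter (fun c => 0 < c)).take i).sum := by
  induction L generalizing i with
  | nil => simp
  | cons a L ih =>
    cases i with
    | zero => simp
    | succ i =>
      rcases Nat.eq_zero_or_pos a with rfl | ha
      · have h1 := ih i
        have h2 : ((L.filter (fun c => 0 < c)).take i).sum ≤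
            ((L.filter (fun c => 0 < c)).take (i + 1)).sum :=
          ((List.take_prefix_take_left (by omega)).sublist).sum_le_sum (by simp)
        simpa using h1.trans h2
      · simpa [ha] using ih i

/-- The sorted list of parts of `conjHilb H n`: the numbers `#{e | i + 1 ≤ H e}` are already
weakly decreasing in `i` when `H` has finite support. -/
lemma sort_conjHilb (H : ℕ → ℕ) (n N : ℕ) (hN : ∀ e, N ≤ e → H e = 0) :
    (conjHilb H n).sort (· ≥ ·) =
      ((List.range n).map
        (fun i => ((Finset.range N).filter (fun e => i + 1 ≤ H e)).card)).filter
        (fun c => 0 < c) := by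
  have hcard : ∀ i, Set.ncard {e : ℕ | i + 1 ≤ H e} =
      ((Finset.range N).filter (fun e => i + 1 ≤ H e)).card := by
    intro i
    rw [← Set.ncard_coe_finset]
    congr 1
    ext e
    simp only [Set.mem_ofPred_eq, Finset.coe_filter, Finset.mem_range]
    refine ⟨fun h => ⟨?_, h⟩, fun h => h.2⟩
    by_contra hne
    have := hN e (by omega)
    omega
  have hcoe : conjHilb H n = ((((List.range n).map
        (fun i => ((Finset.range N).filter (fun e => i + 1 ≤ H e)).card)).filter
        (fun c => 0 < c) : List ℕ) : Multiset ℕ) := by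
    unfold conjHilb
    simp only [hcard]
    rw [← Multiset.coe_range, Multiset.map_coe, Multiset.filter_coe]
  rw [hcoe, Multiset.coe_sort]
  apply List.mergeSort_of_pairwise
  apply List.Pairwise.filter
  rw [List.pairwise_map]
  refine List.pairwise_lt_range.imp ?_
  intro a b hab
  simp only [ge_iff_le, decide_eq_true_eq]
  apply Finset.card_le_card
  intro e he
  simp only [Finset.mem_filter] at he ⊢
  exact ⟨he.1, by omega⟩

/-- Double counting of the cells in the first `m` columns of the diagram of `H`. -/
lemma sum_card_eq_sum_min (H : ℕ → ℕ) (N m : ℕ) :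
    ((List.range m).map
        (fun i => ((Finset.range N).filter (fun e => i + 1 ≤ H e)).card)).sum =
      ∑ e ∈ Finset.range N, min (H e) m := by
  induction m with
  | zero => simp
  | succ m ih =>
    rw [List.range_succ, List.map_append, List.sum_append, ih]
    simp only [List.map_cons, List.map_nil, List.sum_cons, List.sum_nil, add_zero]
    rw [Finset.card_filter, ← Finset.sum_add_distrib]
    apply Finset.sum_congr rfl
    intro e _
    split_ifs <;> omega

section Sweep

variable {k A : Type*} [Field k] [AddCommGroup A] [Module k A] [FiniteDimensional k A]

/-- The sweep through the degrees: `f` raises degrees, and every degree `e < N` is either absorbed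
into `X` (if `e ∉ S`) or paid for by one application of `f` (if `e ∈ S`). -/
lemma exists_range_pow_le_sup (𝒜 : ℕ → Submodule k A) (f : A →ₗ[k] A) (htop : ⨆ i, 𝒜 i = ⊤)
    (hf : ∀ i, (𝒜 i).map f ≤ ⨆ e, ⨆ (_ : i + 1 ≤ e), 𝒜 e) (p : ℕ → Prop) [DecidablePred p]
    (N : ℕ) :
    ∃ X : Submodule k A,
      Module.finrank k X ≤
        ∑ e ∈ (Finset.range N).filter (fun e => ¬ p e), Module.finrank k (𝒜 e) ∧
      LinearMap.range (f ^ ((Finset.range N).filter p).card) ≤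
        X ⊔ ⨆ e, ⨆ (_ : N ≤ e), 𝒜 e := by
  induction N with
  | zero => exact ⟨⊥, by simp, by simp [htop]⟩
  | succ N ih =>
    obtain ⟨X, hX, hr⟩ := ih
    by_cases hp : p N
    · refine ⟨X.map f, ?_, ?_⟩
      · rw [Finset.range_add_one, Finset.filter_insert, if_neg (not_not.mpr hp)]
        exact (Submodule.finrank_map_le f X).trans hX
      · rw [Finset.range_add_one, Finset.filter_insert, if_pos hp,
          Finset.card_insert_of_notMem (by simp), pow_succ', Module.End.mul_eq_comp,
          LinearMap.range_comp]
        refine (Submodule.map_mono hr).trans ?_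
        rw [Submodule.map_sup]
        refine sup_le_sup_left ?_ _
        simp only [Submodule.map_iSup]
        refine iSup₂_le fun e he => (hf e).trans (iSup₂_le fun e₁ he₁ => ?_)
        exact le_iSup₂_of_le e₁ (by omega) le_rfl
    · refine ⟨X ⊔ 𝒜 N, ?_, ?_⟩
      · rw [Finset.range_add_one, Finset.filter_insert, if_pos hp,
          Finset.sum_insert (by simp), add_comm]
        exact (Submodule.finrank_add_le_finrank_add_finrank X (𝒜 N)).trans
          (Nat.add_le_add_right hX _)
      · rw [Finset.range_add_one, Finset.filter_insert, if_neg hp]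
        refine hr.trans (sup_le (le_sup_left.trans le_sup_left) (iSup₂_le fun e he => ?_))
        rcases he.eq_or_lt with rfl | hlt
        · exact le_sup_right.trans le_sup_left
        · exact (le_iSup₂_of_le (f := fun e (_ : N + 1 ≤ e) => 𝒜 e) e hlt le_rfl).trans
            le_sup_right

lemma finrank_range_pow_le (𝒜 : ℕ → Submodule k A) (f : A →ₗ[k] A) (htop : ⨆ i, 𝒜 i = ⊤)
    (hf : ∀ i, (𝒜 i).map f ≤ ⨆ e, ⨆ (_ : i + 1 ≤ e), 𝒜 e) (p : ℕ → Prop) [DecidablePred p]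
    (N : ℕ) (hN : ∀ e, N ≤ e → 𝒜 e = ⊥) :
    Module.finrank k (LinearMap.range (f ^ ((Finset.range N).filter p).card)) ≤
      ∑ e ∈ (Finset.range N).filter (fun e => ¬ p e), Module.finrank k (𝒜 e) := by
  obtain ⟨X, hX, hr⟩ := exists_range_pow_le_sup 𝒜 f htop hf p N
  have hbot : (⨆ e, ⨆ (_ : N ≤ e), 𝒜 e) = ⊥ := by
    rw [eq_bot_iff]
    exact iSup₂_le fun e he => (hN e he).le
  rw [hbot, sup_bot_eq] at hr
  exact (Submodule.finrank_mono hr).trans hX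

end Sweep

/-- Let `A` be a graded Artinian algebra over a field `k` (finite dimensional,
with `A_0 = k·1`), and let `ℓ ∈ m_A` be a homogeneous element (of some degree
`d ≥ 1`).  Then the Jordan type `P_ℓ` of multiplication by `ℓ` satisfies
`P_ℓ ≤ H(A)^∨` in the dominance order. -/
theorem jordan_type_le_conj_hilbert
    {k A : Type*} [Field k] [CommRing A] [Algebra k A]
    (𝒜 : ℕ → Submodule k A) [GradedAlgebra 𝒜] [FiniteDimensional k A]
    (hconn : 𝒜 0 = Submodule.span k {(1 : A)})
    (d : ℕ) (hd : 1 ≤ d) (ℓ : A) (hℓ : ℓ ∈ 𝒜 d)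
    (P : Multiset ℕ) (hP : IsJordanTypeOf (LinearMap.mulLeft k ℓ) P) :
    DomLE P (conjHilb (fun i => Module.finrank k (𝒜 i)) (Module.finrank k A)) := by
  have hint := DirectSum.Decomposition.isInternal 𝒜
  have htop : ⨆ i, 𝒜 i = ⊤ := hint.submodule_iSup_eq_top
  have hf : ∀ i, (𝒜 i).map (LinearMap.mulLeft k ℓ) ≤ ⨆ e, ⨆ (_ : i + 1 ≤ e), 𝒜 e := by
    intro i
    rintro _ ⟨x, hx, rfl⟩
    have hmem : ℓ * x ∈ 𝒜 (d + i) := SetLike.mul_mem_graded hℓ hx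
    exact (le_iSup₂_of_le (f := fun e (_ : i + 1 ≤ e) => 𝒜 e) (d + i) (by omega) le_rfl) hmem
  have hfin : {i | 𝒜 i ≠ ⊥}.Finite :=
    WellFoundedGT.finite_ne_bot_of_iSupIndep hint.submodule_iSupIndep
  obtain ⟨N, hN⟩ : ∃ N, ∀ e, N ≤ e → 𝒜 e = ⊥ := by
    obtain ⟨M, hM⟩ := hfin.bddAbove
    refine ⟨M + 1, fun e he => ?_⟩
    by_contra hne
    have : e ≤ M := hM hne
    omega
  set n := Module.finrank k A with hn
  set H : ℕ → ℕ := fun i => Module.finrank k (𝒜 i) with hH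
  have hHN : ∀ e, N ≤ e → H e = 0 := by
    intro e he
    simp [hH, hN e he]
  have hHn : ∀ e, H e ≤ n := fun e => Submodule.finrank_le _
  have hsumle : ∀ i, (((P.sort (· ≥ ·))).take i).sum ≤ ∑ e ∈ Finset.range N, min (H e) i := by
    intro i
    set j := ((Finset.range N).filter (fun e => i < H e)).card with hj
    have h1 := sum_take_le_mul_add_sum_tsub (P.sort (· ≥ ·)) i j
    have h2 : ((P.sort (· ≥ ·)).map (fun p => p - j)).sum =
        Module.finrank k (LinearMap.range (LinearMap.mulLeft k ℓ ^ j)) := by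
      rw [hP.2 j]
      conv_rhs => rw [← Multiset.sort_eq P (· ≥ ·)]
      rw [Multiset.map_coe, Multiset.sum_coe]
    have h3 := finrank_range_pow_le 𝒜 (LinearMap.mulLeft k ℓ) htop hf (fun e => i < H e) N hN
    rw [← hj] at h3
    have h4 : ∑ e ∈ Finset.range N, min (H e) i =
        i * j + ∑ e ∈ (Finset.range N).filter (fun e => ¬ i < H e), H e := by
      rw [← Finset.sum_filter_add_sum_filter_not _ (fun e => i < H e)]
      congr 1
      · rw [Finset.sum_congr rfl (g := fun _ => i), Finset.sum_const, smul_eq_mul, mul_comm]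
        intro e he
        have := (Finset.mem_filter.mp he).2
        omega
      · refine Finset.sum_congr rfl fun e he => ?_
        have := (Finset.mem_filter.mp he).2
        omega
    rw [h4]
    rw [h2] at h1
    exact h1.trans (Nat.add_le_add_left h3 _)
  have hsort := sort_conjHilb H n N hHN
  have hge : ∀ i, ∑ e ∈ Finset.range N, min (H e) i ≤
      (((conjHilb H n).sort (· ≥ ·)).take i).sum := by
    intro i
    rw [hsort]
    refine le_trans ?_ (sum_take_le_sum_take_filter_pos _ i)
    rw [← List.map_take, List.take_range, sum_card_eq_sum_min]
    refine Finset.sum_le_sum fun e _ => ?_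
    have := hHn e
    omega
  have hpow : LinearMap.mulLeft k ℓ ^ 0 = LinearMap.id := pow_zero (M := Module.End k A) _
  have hPsum : P.sum = n := by
    have h := hP.2 0
    simp only [tsub_zero, Multiset.map_id'] at h
    rw [← h, hn, hpow, LinearMap.range_id, finrank_top]
  have hQsum : (conjHilb H n).sum = ∑ e ∈ Finset.range N, H e := by
    rw [← Multiset.sort_eq (conjHilb H n) (· ≥ ·), Multiset.sum_coe, hsort]
    have hpos : ∀ L : List ℕ, (L.filter (fun c => 0 < c)).sum = L.sum := by
      intro L
      induction L with
      | nil => simp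
      | cons a L ih =>
        rcases Nat.eq_zero_or_pos a with rfl | ha
        · simpa using ih
        · simpa [ha] using ih
    rw [hpos, sum_card_eq_sum_min]
    exact Finset.sum_congr rfl fun e _ => min_eq_left (hHn e)
  have hnsum : n = ∑ e ∈ Finset.range N, H e := by
    apply le_antisymm
    · -- the key estimate with no degree removed bounds the rank of the identity
      have h := finrank_range_pow_le 𝒜 (LinearMap.mulLeft k ℓ) htop hf (fun _ => False) N hN
      simp only [not_false_eq_true, Finset.filter_true] at h
      rw [Finset.filter_false, Finset.card_empty, hpow, LinearMap.range_id, finrank_top] at h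
      exact h
    · -- the parts in degrees `< N` of a homogeneous basis form a linearly independent family
      let b := hint.collectedBasis fun i => Module.finBasis k (𝒜 i)
      let g : (Σ i : Fin N, Fin (H i)) → Σ i : ℕ, Fin (H i) := fun a => ⟨a.1, a.2⟩
      have hg : Function.Injective g := by
        rintro ⟨⟨i, hi⟩, a⟩ ⟨⟨i₁, hi₁⟩, a₁⟩ h
        simp only [g, Sigma.mk.injEq] at h
        obtain ⟨rfl, h⟩ := h
        simpa using h
      have h := (b.linearIndependent.comp g hg).fintype_card_le_finrank
      rw [Fintype.card_sigma] at h
      simp only [Fintype.card_fin] at h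
      rwa [Fin.sum_univ_eq_sum_range H N] at h
  exact ⟨by rw [hPsum, hQsum, hnsum], fun i => (hsumle i).trans (hge i)⟩
end

section
/- Let A be a graded Artinian algebra over a field k and let ℓ ∈ m_A be a homogeneous element. Then ℓ is a strong Lefschetz element of A if and only if ℓ lies in A_1 and its Jordan type satisfies P_ℓ = H(A)^∨. -/
/-- A linear form `ℓ` is strong Lefschetz for the graded algebra `A` with
grading `𝒜` if `ℓ ∈ 𝒜 1` and all multiplication maps `×ℓ^j : 𝒜 i → 𝒜 (i+j)`
have maximal rank. -/
def IsSL {k A : Type*} [Field k] [CommRing A] [Algebra k A]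
    (𝒜 : ℕ → Submodule k A) (ℓ : A) : Prop :=
  ℓ ∈ 𝒜 1 ∧ ∀ i j : ℕ,
    Module.finrank k ((𝒜 i).map (LinearMap.mulLeft k (ℓ ^ j))) =
      min (Module.finrank k (𝒜 i)) (Module.finrank k (𝒜 (i + j)))

/-! ### Runs in the level sets of a Hilbert function -/

/-- The degrees below `N` in which `H` exceeds `p`. -/
def levelSet (H : ℕ → ℕ) (N p : ℕ) : Finset ℕ :=
  (Finset.range N).filter (fun i => p < H i)

/-- The starting points below `N` of the runs of `j + 1` consecutive degrees on which `H`
exceeds `p`. -/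
def runStarts (H : ℕ → ℕ) (N p j : ℕ) : Finset ℕ :=
  (Finset.range N).filter (fun i => ∀ t ≤ j, p < H (i + t))

/-- The minimum of `H` on `[i, i + j]`, encoded as the number of `p < n` which `H` exceeds
throughout that interval (`n` being an upper bound of `H`). -/
def runMin (H : ℕ → ℕ) (n i j : ℕ) : ℕ :=
  ((Finset.range n).filter (fun p => ∀ t ≤ j, p < H (i + t))).card

lemma sum_runMin (H : ℕ → ℕ) (N n j : ℕ) :
    ∑ i ∈ Finset.range N, runMin H n i j =
      ∑ p ∈ Finset.range n, (runStarts H N p j).card := by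
  simp only [runMin, runStarts, Finset.card_filter]
  exact Finset.sum_comm

lemma mem_levelSet {H : ℕ → ℕ} {N : ℕ} (hN : ∀ i, N ≤ i → H i = 0) {p i : ℕ} :
    i ∈ levelSet H N p ↔ p < H i := by
  simp only [levelSet, Finset.mem_filter, Finset.mem_range, and_iff_right_iff_imp]
  intro h
  by_contra hi
  have := hN i (by omega)
  omega

/-- A finite set `S` contains at most `|S| - j` runs of length `j + 1`: the run starting last
contributes `j` elements of `S` at which no run starts. -/
lemma card_runStarts_le {H : ℕ → ℕ} {N : ℕ} (hN : ∀ i, N ≤ i → H i = 0) (p j : ℕ) :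
    (runStarts H N p j).card ≤ (levelSet H N p).card - j := by
  rcases (runStarts H N p j).eq_empty_or_nonempty with h | h
  · simp [h]
  set m := (runStarts H N p j).max' h with hm
  have hmem : m ∈ runStarts H N p j := Finset.max'_mem _ _
  have hdisj : Disjoint (runStarts H N p j) (Finset.Ioc m (m + j)) := by
    rw [Finset.disjoint_left]
    intro a ha hb
    have := Finset.le_max' _ a ha
    simp only [Finset.mem_Ioc] at hb
    omega
  have hsub : runStarts H N p j ∪ Finset.Ioc m (m + j) ⊆ levelSet H N p := by
    intro a ha
    rw [mem_levelSet hN]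
    simp only [runStarts, Finset.mem_union, Finset.mem_filter, Finset.mem_Ioc] at ha hmem
    rcases ha with ha | ha
    · exact ha.2 0 (Nat.zero_le _)
    · have := hmem.2 (a - m) (by omega)
      rwa [Nat.add_sub_cancel' (by omega)] at this
  have := Finset.card_le_card hsub
  rw [Finset.card_union_of_disjoint hdisj, Nat.card_Ioc] at this
  omega

/-- If `H` is unimodal, every level set is an interval, and the bound `card_runStarts_le` is
attained. -/
lemma le_card_runStarts {H : ℕ → ℕ} {N : ℕ} (hN : ∀ i, N ≤ i → H i = 0)
    (hconv : ∀ i j t, t ≤ j → min (H i) (H (i + j)) ≤ H (i + t)) (p j : ℕ) :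
    (levelSet H N p).card - j ≤ (runStarts H N p j).card := by
  rcases (levelSet H N p).eq_empty_or_nonempty with h | h
  · simp [h]
  set b := (levelSet H N p).max' h with hb
  have hbm : b ∈ levelSet H N p := Finset.max'_mem _ _
  have hsub : levelSet H N p ⊆ runStarts H N p j ∪ Finset.Ico (b + 1 - j) (b + 1) := by
    intro a ha
    have hab : a ≤ b := Finset.le_max' _ a ha
    by_cases hj : a + j ≤ b
    · refine Finset.mem_union_left _ ?_
      have haN : a < N := by
        simp only [levelSet, Finset.mem_filter, Finset.mem_range] at ha
        exact ha.1
      simp only [runStarts, Finset.mem_filter, Finset.mem_range]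
      refine ⟨haN, fun t ht => ?_⟩
      rw [mem_levelSet hN] at ha hbm
      have := hconv a (b - a) t (by omega)
      rw [Nat.add_sub_cancel' hab] at this
      exact lt_of_lt_of_le (lt_min ha hbm) this
    · refine Finset.mem_union_right _ ?_
      simp only [Finset.mem_Ico]
      omega
  have h1 := Finset.card_le_card hsub
  have h2 := Finset.card_union_le (runStarts H N p j) (Finset.Ico (b + 1 - j) (b + 1))
  rw [Nat.card_Ico] at h2
  omega

/-- Counting runs of length `|S|` suffices to recognise the level set `S` as an interval. -/
lemma levelSet_convex {H : ℕ → ℕ} {N : ℕ} (hN : ∀ i, N ≤ i → H i = 0) {p : ℕ}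
    (hcard : ∀ j, (runStarts H N p j).card = (levelSet H N p).card - j)
    {i j t : ℕ} (ht : t ≤ j) (hi : p < H i) (hj : p < H (i + j)) : p < H (i + t) := by
  rw [← mem_levelSet hN] at hi hj ⊢
  have hpos : 0 < (levelSet H N p).card := Finset.card_pos.mpr ⟨i, hi⟩
  have h1 := hcard ((levelSet H N p).card - 1)
  obtain ⟨a, ha⟩ : (runStarts H N p ((levelSet H N p).card - 1)).Nonempty := by
    rw [← Finset.card_pos]
    omega
  have hsub : Finset.Ico a (a + (levelSet H N p).card) ⊆ levelSet H N p := by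
    intro x hx
    simp only [Finset.mem_Ico] at hx
    simp only [runStarts, Finset.mem_filter] at ha
    have := ha.2 (x - a) (by omega)
    rw [Nat.add_sub_cancel' hx.1] at this
    exact (mem_levelSet hN).mpr this
  have heq := Finset.eq_of_subset_of_card_le hsub (by simp)
  rw [← heq, Finset.mem_Ico] at hi hj ⊢
  omega

/-- The numerical core: `ρ i j` stands for the rank of `×ℓ^j : A_i → A_{i+j}`, which is bounded
by every dimension between the two degrees because the map factors through those pieces. -/
lemma maxRank_iff_sum_eq {H : ℕ → ℕ} {ρ : ℕ → ℕ → ℕ} {N n : ℕ}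
    (hN : ∀ i, N ≤ i → H i = 0) (hn : ∀ i, H i ≤ n)
    (hρ : ∀ i j t, t ≤ j → ρ i j ≤ H (i + t)) :
    (∀ i j, ρ i j = min (H i) (H (i + j))) ↔
      ∀ j, ∑ i ∈ Finset.range N, ρ i j =
        ∑ p ∈ Finset.range n, ((levelSet H N p).card - j) := by
  have hle : ∀ i j, ρ i j ≤ runMin H n i j := by
    intro i j
    rw [← Finset.card_range (ρ i j)]
    refine Finset.card_le_card fun p hp => ?_
    simp only [Finset.mem_filter, Finset.mem_range] at hp ⊢
    exact ⟨hp.trans_le ((hρ i j 0 (Nat.zero_le _)).trans (hn _)),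
      fun t ht => hp.trans_le (hρ i j t ht)⟩
  have hmin : ∀ i j, runMin H n i j ≤ min (H i) (H (i + j)) := by
    intro i j
    rw [← Finset.card_range (min (H i) (H (i + j)))]
    refine Finset.card_le_card fun p hp => ?_
    simp only [Finset.mem_filter, Finset.mem_range] at hp ⊢
    exact lt_min (hp.2 0 (Nat.zero_le _)) (hp.2 j le_rfl)
  constructor
  · intro h j
    have hconv : ∀ i j t, t ≤ j → min (H i) (H (i + j)) ≤ H (i + t) := by
      intro i j t ht
      rw [← h]
      exact hρ i j t ht
    have h1 : ∀ i j, ρ i j = runMin H n i j := fun i j =>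
      le_antisymm (hle i j) (by rw [h]; exact hmin i j)
    simp only [h1]
    rw [sum_runMin]
    exact Finset.sum_congr rfl fun p _ =>
      le_antisymm (card_runStarts_le hN p j) (le_card_runStarts hN hconv p j)
  · intro h
    -- `∑ ρ ≤ ∑ runMin = ∑ |runStarts| ≤ ∑ (|levelSet| - j)` has equal ends.
    have hA : ∀ j, ∑ i ∈ Finset.range N, ρ i j ≤ ∑ i ∈ Finset.range N, runMin H n i j :=
      fun j => Finset.sum_le_sum fun i _ => hle i j
    have hB : ∀ j, ∑ p ∈ Finset.range n, (runStarts H N p j).card ≤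
        ∑ p ∈ Finset.range n, ((levelSet H N p).card - j) :=
      fun j => Finset.sum_le_sum fun p _ => card_runStarts_le hN p j
    have hρeq : ∀ j, ∀ i ∈ Finset.range N, ρ i j = runMin H n i j := fun j =>
      (Finset.sum_eq_sum_iff_of_le fun i _ => hle i j).mp
        (le_antisymm (hA j) (by rw [h j, sum_runMin]; exact hB j))
    have hcard : ∀ j, ∀ p ∈ Finset.range n,
        (runStarts H N p j).card = (levelSet H N p).card - j := fun j =>
      (Finset.sum_eq_sum_iff_of_le fun p _ => card_runStarts_le hN p j).mp
        (le_antisymm (hB j) (by rw [← h j, ← sum_runMin]; exact hA j))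
    intro i j
    rcases lt_or_ge i N with hi | hi
    · rw [hρeq j i (Finset.mem_range.mpr hi)]
      refine le_antisymm (hmin i j) ?_
      rw [← Finset.card_range (min (H i) (H (i + j)))]
      refine Finset.card_le_card fun p hp => ?_
      simp only [Finset.mem_filter, Finset.mem_range, lt_min_iff] at hp ⊢
      have hpn : p < n := hp.1.trans_le (hn i)
      exact ⟨hpn, fun t ht => levelSet_convex hN
        (fun j => hcard j p (Finset.mem_range.mpr hpn)) ht hp.1 hp.2⟩
    · have := hρ i j 0 (Nat.zero_le _)
      rw [Nat.add_zero, hN i hi] at this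
      rw [hN i hi]
      omega

/-! ### Ranks of powers of a linear form -/

lemma finrank_finset_sup_of_iSupIndep {k V ι : Type*} [Field k] [AddCommGroup V] [Module k V]
    [FiniteDimensional k V] {W : ι → Submodule k V} (hW : iSupIndep W) (s : Finset ι) :
    Module.finrank k (s.sup W : Submodule k V) = ∑ i ∈ s, Module.finrank k (W i) := by
  classical
  induction s using Finset.induction_on with
  | empty => simp
  | insert a s ha ih =>
    have hdisj : Disjoint (W a) (s.sup W) := by
      rw [Finset.sup_eq_iSup]
      exact hW.disjoint_biSup ha
    have h := Submodule.finrank_sup_add_finrank_inf_eq (W a) (s.sup W)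
    rw [hdisj.eq_bot, finrank_bot, add_zero] at h
    rw [Finset.sup_insert, Finset.sum_insert ha, h, ih]

section GradedAlgebra

variable {k A : Type*} [Field k] [CommRing A] [Algebra k A] (𝒜 : ℕ → Submodule k A)
  [GradedAlgebra 𝒜]

lemma map_mulLeft_pow_le {ℓ : A} (hℓ : ℓ ∈ 𝒜 1) (i j : ℕ) :
    (𝒜 i).map (LinearMap.mulLeft k (ℓ ^ j)) ≤ 𝒜 (i + j) := by
  rintro _ ⟨a, ha, rfl⟩
  have h := SetLike.mul_mem_graded (SetLike.pow_mem_graded j hℓ) ha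
  rw [smul_eq_mul, mul_one, add_comm] at h
  exact h

/-- The map `×ℓ^j : A_i → A_{i+j}` factors through `A_{i+t}` for every `t ≤ j`. -/
lemma finrank_map_mulLeft_pow_le [FiniteDimensional k A] {ℓ : A} (hℓ : ℓ ∈ 𝒜 1) {i j t : ℕ}
    (ht : t ≤ j) :
    Module.finrank k ((𝒜 i).map (LinearMap.mulLeft k (ℓ ^ j))) ≤ Module.finrank k (𝒜 (i + t)) := by
  have h : (𝒜 i).map (LinearMap.mulLeft k (ℓ ^ j)) ≤
      (𝒜 (i + t)).map (LinearMap.mulLeft k (ℓ ^ (j - t))) := by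
    rintro _ ⟨a, ha, rfl⟩
    refine ⟨ℓ ^ t * a, map_mulLeft_pow_le 𝒜 hℓ i t ⟨a, ha, rfl⟩, ?_⟩
    simp only [LinearMap.mulLeft_apply]
    rw [← mul_assoc, ← pow_add, Nat.sub_add_cancel ht]
  exact (Submodule.finrank_mono h).trans (Submodule.finrank_map_le _ _)

/-- The images `ℓ^j A_i` lie in the distinct graded pieces `A_{i+j}`, so the rank of `×ℓ^j` is the
sum of their dimensions. -/
lemma finrank_range_mulLeft_pow [FiniteDimensional k A] {ℓ : A} (hℓ : ℓ ∈ 𝒜 1) {N : ℕ}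
    (hN : ∀ i, N ≤ i → 𝒜 i = ⊥) (j : ℕ) :
    Module.finrank k (LinearMap.range (LinearMap.mulLeft k ℓ ^ j)) =
      ∑ i ∈ Finset.range N, Module.finrank k ((𝒜 i).map (LinearMap.mulLeft k (ℓ ^ j))) := by
  have hint := DirectSum.Decomposition.isInternal 𝒜
  have hind : iSupIndep fun i => (𝒜 i).map (LinearMap.mulLeft k (ℓ ^ j)) :=
    (hint.submodule_iSupIndep.comp (add_left_injective j)).mono
      fun i => map_mulLeft_pow_le 𝒜 hℓ i j
  have htop : (Finset.range N).sup 𝒜 = ⊤ := by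
    rw [eq_top_iff, ← hint.submodule_iSup_eq_top]
    refine iSup_le fun i => ?_
    rcases lt_or_ge i N with hi | hi
    · exact Finset.le_sup (Finset.mem_range.mpr hi)
    · rw [hN i hi]
      exact bot_le
  have hrange : LinearMap.range (LinearMap.mulLeft k (ℓ ^ j)) =
      (Finset.range N).sup fun i => (𝒜 i).map (LinearMap.mulLeft k (ℓ ^ j)) := by
    rw [LinearMap.range_eq_map, ← htop, Finset.sup_eq_iSup, Finset.sup_eq_iSup]
    simp only [Submodule.map_iSup]
  rw [LinearMap.pow_mulLeft, hrange, finrank_finset_sup_of_iSupIndep hind]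

end GradedAlgebra

lemma sum_map_conjHilb {H : ℕ → ℕ} {N : ℕ} (hN : ∀ i, N ≤ i → H i = 0) (n j : ℕ) :
    ((conjHilb H n).map (fun p => p - j)).sum =
      ∑ p ∈ Finset.range n, ((levelSet H N p).card - j) := by
  have hset : ∀ p, Set.ncard {d : ℕ | p + 1 ≤ H d} = (levelSet H N p).card := by
    intro p
    rw [← Set.ncard_coe_finset]
    congr 1
    ext d
    rw [Finset.mem_coe, mem_levelSet hN]
    rfl
  -- Discarded parts are zero, and `0 - j = 0`.
  have hfilter : ∀ s : Multiset ℕ,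
      ((s.filter (fun c => 0 < c)).map (fun p => p - j)).sum = (s.map (fun p => p - j)).sum := by
    intro s
    induction s using Multiset.induction_on with
    | empty => simp
    | cons a s ih =>
      rcases Nat.eq_zero_or_pos a with ha | ha
      · simp [ha, ih]
      · simp [ha, ih]
  rw [conjHilb, hfilter, Multiset.map_map]
  simp only [Function.comp_def, hset]
  rfl

/-- Let `A` be a graded Artinian algebra over a field `k` and `ℓ ∈ m_A` a
homogeneous element.  Then `ℓ` is a strong Lefschetz element of `A` if and only
if `ℓ ∈ A_1` and its Jordan type satisfies `P_ℓ = H(A)^∨`. -/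
theorem isSL_iff_jordan_type_eq_conj_hilbert
    {k A : Type*} [Field k] [CommRing A] [Algebra k A]
    (𝒜 : ℕ → Submodule k A) [GradedAlgebra 𝒜] [FiniteDimensional k A]
    (hconn : 𝒜 0 = Submodule.span k {(1 : A)})
    (d : ℕ) (hd : 1 ≤ d) (ℓ : A) (hℓ : ℓ ∈ 𝒜 d) :
    IsSL 𝒜 ℓ ↔
      (ℓ ∈ 𝒜 1 ∧ IsJordanTypeOf (LinearMap.mulLeft k ℓ)
        (conjHilb (fun i => Module.finrank k (𝒜 i)) (Module.finrank k A))) := by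
  have hfin : {i | 𝒜 i ≠ ⊥}.Finite := WellFoundedGT.finite_ne_bot_of_iSupIndep
    (DirectSum.Decomposition.isInternal 𝒜).submodule_iSupIndep
  obtain ⟨M, hM⟩ := hfin.bddAbove
  have hN : ∀ i, M + 1 ≤ i → 𝒜 i = ⊥ := by
    intro i hi
    by_contra h
    have := hM h
    omega
  have hHN : ∀ i, M + 1 ≤ i → Module.finrank k (𝒜 i) = 0 := by
    intro i hi
    rw [hN i hi, finrank_bot]
  rw [IsSL, IsJordanTypeOf]
  refine and_congr_right fun hℓ1 => ?_
  have hpos : ∀ p ∈ conjHilb (fun i => Module.finrank k (𝒜 i)) (Module.finrank k A), 0 < p :=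
    fun p hp => (Multiset.mem_filter.mp hp).2
  rw [and_iff_right hpos]
  simp only [finrank_range_mulLeft_pow 𝒜 hℓ1 hN,
    sum_map_conjHilb (H := fun i => Module.finrank k (𝒜 i)) hHN]
  exact maxRank_iff_sum_eq (H := fun i => Module.finrank k (𝒜 i))
    (ρ := fun i j => Module.finrank k ((𝒜 i).map (LinearMap.mulLeft k (ℓ ^ j))))
    hHN (fun i => Submodule.finrank_le _)
    (fun i j t ht => finrank_map_mulLeft_pow_le 𝒜 hℓ1 ht)
end

section
/- Let A be a standard graded Artinian algebra over a field k (i.e., A is generated in degree 1 over A_0 = k) whose Hilbert function H(A) is unimodal. Then A has an element ℓ ∈ m_A of strong Lefschetz Jordan type if and only if A has a strong Lefschetz element ℓ' ∈ A_1. -/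
/-- A sequence of integers is unimodal. -/
def Unimodal (H : ℕ → ℕ) : Prop :=
  ∃ c : ℕ, (∀ i j : ℕ, i ≤ j → j ≤ c → H i ≤ H j) ∧ (∀ i j : ℕ, c ≤ i → i ≤ j → H j ≤ H i)

/-! ### Numerical functions -/

/-- For a unimodal sequence the sign of `H (d + s) - H d` changes at most once. The last clause says
that the threshold `t` is taken as large as possible below the peak `c`. -/
lemma exists_threshold (H : ℕ → ℕ) (c : ℕ)
    (h1 : ∀ i j : ℕ, i ≤ j → j ≤ c → H i ≤ H j)
    (h2 : ∀ i j : ℕ, c ≤ i → i ≤ j → H j ≤ H i) (s : ℕ) :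
    ∃ t ≤ c, (∀ d < t, H d ≤ H (d + s)) ∧ (∀ d, t ≤ d → H (d + s) ≤ H d) ∧
      ∀ d < c, d + s ≤ c → d < t := by
  classical
  have hex : ∃ t, c ≤ t ∨ H (t + s) < H t := ⟨c, Or.inl le_rfl⟩
  refine ⟨Nat.find hex, Nat.find_min' hex (Or.inl le_rfl), ?_, ?_, ?_⟩
  · intro d hd
    have := Nat.find_min hex hd
    push Not at this
    exact this.2
  · intro d hd
    by_cases hdc : c ≤ d
    · exact h2 _ _ hdc (by omega)
    · rcases Nat.find_spec hex with h | h
      · omega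
      · generalize Nat.find hex = t at *
        have hts : c ≤ t + s := by
          by_contra hcon
          have := h1 t (t + s) (by omega) (by omega)
          omega
        have := h2 (t + s) (d + s) hts (by omega)
        have := h1 t d hd (by omega)
        omega
  · intro d hdc hds
    rw [Nat.lt_find_iff]
    intro m hm
    have := h1 m (m + s) (by omega) (by omega)
    omega

lemma ncard_sub_eq (S : Set ℕ) (N s : ℕ) (hS : S.OrdConnected) (hN : ∀ d ∈ S, d < N)
    [DecidablePred fun d => d ∈ S ∧ d + s ∈ S] :
    S.ncard - s = ((Finset.range N).filter (fun d => d ∈ S ∧ d + s ∈ S)).card := by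
  classical
  rcases S.eq_empty_or_nonempty with rfl | hne
  · simp
  have hfin : S.Finite := (Set.finite_lt_nat N).subset hN
  obtain ⟨a, ha, hamin⟩ := hfin.exists_minimal hne
  obtain ⟨b, hb, hbmax⟩ := hfin.exists_maximal hne
  have hmem : ∀ d, d ∈ S ↔ a ≤ d ∧ d ≤ b := by
    intro d
    constructor
    · intro hd
      have h1 := @hamin d hd
      have h2 := @hbmax d hd
      exact ⟨by by_contra hh; exact hh (h1 (by omega)), by by_contra hh; exact hh (h2 (by omega))⟩
    · intro hd
      exact hS.out ha hb hd
  have hSe : S = (Finset.Icc a b : Finset ℕ) := by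
    ext d; simp [hmem]
  have hbN := hN b hb
  have h2 : (Finset.range N).filter (fun d => d ∈ S ∧ d + s ∈ S) = Finset.Ico a (b + 1 - s) := by
    ext d
    simp only [Finset.mem_filter, Finset.mem_range, Finset.mem_Ico, hmem]
    omega
  rw [h2, hSe, Set.ncard_coe_finset]
  simp
  omega

/-- The ranks prescribed by the conjugate of a unimodal Hilbert function: both sides count the
pairs `(i, d)` such that `d` and `d + s` lie in the `i`-th superlevel set of `H`. -/
lemma conjHilb_sum (H : ℕ → ℕ) (n N s : ℕ) (hu : Unimodal H) (hn : ∀ d, H d ≤ n)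
    (hN : ∀ d, N ≤ d → H d = 0) :
    ((conjHilb H n).map (fun p => p - s)).sum =
      ∑ d ∈ Finset.range N, min (H d) (H (d + s)) := by
  classical
  have hfilter : ∀ M : Multiset ℕ,
      ((M.filter (fun c => 0 < c)).map (fun p => p - s)).sum = (M.map (fun p => p - s)).sum := by
    intro M
    induction M using Multiset.induction_on with
    | empty => simp
    | cons a M ih =>
      rcases Nat.eq_zero_or_pos a with rfl | h
      · simp [ih]
      · simp [h, ih]
  rw [conjHilb, hfilter, Multiset.map_map]
  change ∑ i ∈ Finset.range n, (Set.ncard {d : ℕ | i + 1 ≤ H d} - s) = _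
  obtain ⟨c, h1, h2⟩ := hu
  have key : ∀ i, Set.ncard {d : ℕ | i + 1 ≤ H d} - s =
      ∑ d ∈ Finset.range N, if i + 1 ≤ H d ∧ i + 1 ≤ H (d + s) then 1 else 0 := by
    intro i
    rw [ncard_sub_eq _ N s]
    · rw [Finset.card_filter]
      rfl
    · refine ⟨fun x hx y hy z hz => ?_⟩
      simp only [Set.mem_ofPred_eq, Set.mem_Icc] at *
      rcases le_total z c with h | h
      · exact hx.trans (h1 _ _ hz.1 h)
      · exact hy.trans (h2 _ _ h hz.2)
    · intro d hd
      by_contra hh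
      have := hN d (by omega)
      simp only [Set.mem_ofPred_eq] at hd
      omega
  simp_rw [key]
  rw [Finset.sum_comm]
  refine Finset.sum_congr rfl fun d _ => ?_
  rw [← Finset.card_filter]
  have : (Finset.range n).filter (fun i => i + 1 ≤ H d ∧ i + 1 ≤ H (d + s)) =
      Finset.range (min (H d) (H (d + s))) := by
    ext i
    have := hn d
    simp only [Finset.mem_filter, Finset.mem_range, lt_min_iff]
    omega
  rw [this, Finset.card_range]

/-! ### The degree filtration -/

lemma finrank_finset_sup {k A : Type*} [Field k] [AddCommGroup A] [Module k A]
    [FiniteDimensional k A] (V : ℕ → Submodule k A) (hV : iSupIndep V) (S : Finset ℕ) :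
    Module.finrank k (S.sup V : Submodule k A) = ∑ d ∈ S, Module.finrank k (V d) := by
  classical
  induction S using Finset.induction_on with
  | empty => simp
  | insert a S ha ih =>
    rw [Finset.sup_insert, Finset.sum_insert ha, ← ih]
    have hd : Disjoint (V a) (S.sup V) := by
      refine (hV a).mono_right (Finset.sup_le fun d hd => ?_)
      exact le_iSup₂_of_le d (fun h => ha (h ▸ hd)) le_rfl
    have := Submodule.finrank_sup_add_finrank_inf_eq (V a) (S.sup V)
    rw [hd.eq_bot, finrank_bot] at this
    omega

/-- The piece `A_{≥ t}` of the degree filtration. -/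
def degGE {k A : Type*} [Field k] [CommRing A] [Algebra k A]
    (𝒜 : ℕ → Submodule k A) (t : ℕ) : Submodule k A := ⨆ i : ℕ, 𝒜 (i + t)

section Filtration

variable {k A : Type*} [Field k] [CommRing A] [Algebra k A]
    (𝒜 : ℕ → Submodule k A)

lemma le_degGE {t d : ℕ} (h : t ≤ d) : 𝒜 d ≤ degGE 𝒜 t := by
  obtain ⟨i, rfl⟩ := Nat.exists_eq_add_of_le' h
  exact le_iSup (fun i => 𝒜 (i + t)) i

lemma degGE_antitone {t t' : ℕ} (h : t ≤ t') : degGE 𝒜 t' ≤ degGE 𝒜 t :=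
  iSup_le fun _ => le_degGE 𝒜 (by omega)

lemma degGE_eq_sup (N M t : ℕ) (hN : ∀ d, N ≤ d → 𝒜 d = ⊥) (hM : N ≤ M) :
    degGE 𝒜 t = (Finset.Ico t M).sup 𝒜 := by
  apply le_antisymm
  · refine iSup_le fun i => ?_
    by_cases h : i + t < M
    · exact Finset.le_sup (f := 𝒜) (by simp [h])
    · rw [hN _ (by omega)]; exact bot_le
  · refine Finset.sup_le fun d hd => ?_
    exact le_degGE 𝒜 (Finset.mem_Ico.1 hd).1

lemma exists_leading {t : ℕ} {x : A} (hx : x ∈ degGE 𝒜 t) :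
    ∃ y ∈ 𝒜 t, ∃ z ∈ degGE 𝒜 (t + 1), x = y + z := by
  have : degGE 𝒜 t ≤ 𝒜 t ⊔ degGE 𝒜 (t + 1) := by
    refine iSup_le fun i => ?_
    rcases i with _ | i
    · rw [Nat.zero_add]; exact le_sup_left
    · exact (le_degGE 𝒜 (by omega)).trans le_sup_right
  obtain ⟨y, hy, z, hz, h⟩ := Submodule.mem_sup.1 (this hx)
  exact ⟨y, hy, z, hz, h.symm⟩

variable [GradedAlgebra 𝒜]

lemma mul_mem_degGE {a b : ℕ} {x y : A} (hx : x ∈ degGE 𝒜 a) (hy : y ∈ degGE 𝒜 b) :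
    x * y ∈ degGE 𝒜 (a + b) := by
  have : degGE 𝒜 a * degGE 𝒜 b ≤ degGE 𝒜 (a + b) := by
    rw [degGE, degGE, Submodule.iSup_mul]
    refine iSup_le fun i => ?_
    rw [Submodule.mul_iSup]
    refine iSup_le fun j => ?_
    refine Submodule.mul_le.2 fun m hm n hn => ?_
    exact le_degGE 𝒜 (by omega) (SetLike.mul_mem_graded hm hn)
  exact this (Submodule.mul_mem_mul hx hy)

lemma iSupIndep_grading : iSupIndep 𝒜 :=
  (DirectSum.Decomposition.isInternal 𝒜).submodule_iSupIndep

lemma eq_zero_of_mem_degGE {d : ℕ} {x : A} (hx : x ∈ 𝒜 d) (hx' : x ∈ degGE 𝒜 (d + 1)) :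
    x = 0 := by
  have h := iSupIndep_grading 𝒜 d
  refine Submodule.disjoint_def.1 h x hx ?_
  have : degGE 𝒜 (d + 1) ≤ ⨆ j, ⨆ (_ : j ≠ d), 𝒜 j := by
    refine iSup_le fun i => ?_
    exact le_iSup₂_of_le (i + (d + 1)) (by omega) le_rfl
  exact this hx'

lemma pow_leading {l l1 z : A} (hl1 : l1 ∈ 𝒜 1) (hz : z ∈ degGE 𝒜 2) (hl : l = l1 + z) (s : ℕ) :
    ∃ z' ∈ degGE 𝒜 (s + 1), l ^ s = l1 ^ s + z' := by
  induction s with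
  | zero => exact ⟨0, zero_mem _, by simp⟩
  | succ s ih =>
    obtain ⟨z', hz', h⟩ := ih
    have hp : l1 ^ s ∈ 𝒜 s := by
      simpa using SetLike.pow_mem_graded s hl1
    refine ⟨l1 ^ s * z + z' * l1 + z' * z, ?_, by rw [pow_succ, h, hl]; ring⟩
    refine add_mem (add_mem ?_ ?_) ?_
    · exact degGE_antitone 𝒜 (by omega) (mul_mem_degGE 𝒜 (le_degGE 𝒜 le_rfl hp) hz)
    · exact mul_mem_degGE 𝒜 hz' (le_degGE 𝒜 le_rfl hl1)
    · exact degGE_antitone 𝒜 (by omega) (mul_mem_degGE 𝒜 hz' hz)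

lemma pow_mem_degGE {l : A} (hl : l ∈ degGE 𝒜 1) (s : ℕ) : l ^ s ∈ degGE 𝒜 s := by
  obtain ⟨y, hy, z, hz, h⟩ := exists_leading 𝒜 hl
  obtain ⟨z', hz', h'⟩ := pow_leading 𝒜 hy hz h s
  rw [h']
  refine add_mem (le_degGE 𝒜 le_rfl ?_) (degGE_antitone 𝒜 (by omega) hz')
  simpa using SetLike.pow_mem_graded s hy

lemma degGE_zero : degGE 𝒜 0 = ⊤ := by
  have := (DirectSum.Decomposition.isInternal 𝒜).submodule_iSup_eq_top
  simpa [degGE] using this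

variable [FiniteDimensional k A]

lemma exists_bound : ∃ N, ∀ d, N ≤ d → 𝒜 d = ⊥ := by
  have h := WellFoundedGT.finite_ne_bot_of_iSupIndep (iSupIndep_grading 𝒜)
  obtain ⟨N, hN⟩ := h.bddAbove
  refine ⟨N + 1, fun d hd => ?_⟩
  by_contra hne
  have := hN hne
  omega

/-! ### Ranks of powers -/

/-- The rank of a power of a linear form is the sum of its ranks on the graded pieces. -/
lemma rank_homogeneous (N : ℕ) (hN : ∀ d, N ≤ d → 𝒜 d = ⊥) {l : A} (hl : l ∈ 𝒜 1) (s : ℕ) :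
    Module.finrank k (LinearMap.range (LinearMap.mulLeft k (l ^ s))) =
      ∑ d ∈ Finset.range N, Module.finrank k ((𝒜 d).map (LinearMap.mulLeft k (l ^ s))) := by
  have hp : l ^ s ∈ 𝒜 s := by simpa using SetLike.pow_mem_graded s hl
  have hind : iSupIndep (fun d => (𝒜 d).map (LinearMap.mulLeft k (l ^ s))) := by
    have h1 : iSupIndep (fun d => 𝒜 (d + s)) :=
      (iSupIndep_grading 𝒜).comp (add_left_injective s)
    refine h1.mono fun d => ?_
    rintro _ ⟨x, hx, rfl⟩
    change l ^ s * x ∈ 𝒜 (d + s)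
    rw [add_comm]
    exact SetLike.mul_mem_graded hp hx
  rw [← finrank_finset_sup _ hind]
  have htop : (⊤ : Submodule k A) = (Finset.range N).sup 𝒜 := by
    rw [← degGE_zero 𝒜, degGE_eq_sup 𝒜 N N 0 hN le_rfl, Finset.range_eq_Ico]
  have hrange : LinearMap.range (LinearMap.mulLeft k (l ^ s)) =
      (Finset.range N).sup (fun d => (𝒜 d).map (LinearMap.mulLeft k (l ^ s))) := by
    rw [← Submodule.map_top, htop]
    apply le_antisymm
    · rw [Submodule.map_le_iff_le_comap]
      refine Finset.sup_le fun d hd => ?_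
      rw [← Submodule.map_le_iff_le_comap]
      exact Finset.le_sup (f := fun d => (𝒜 d).map (LinearMap.mulLeft k (l ^ s))) hd
    · exact Finset.sup_le fun d hd => Submodule.map_mono (Finset.le_sup (f := 𝒜) hd)
  rw [hrange]

/-- If `ℓ^s` has the largest rank that the filtration allows at the threshold `t`, then `ℓ^s` is
injective from `A_{< t}` to `A / A_{≥ t + s}` and surjective from `A_{≥ t}` to `A_{≥ t + s}`. -/
lemma extremal_rank (N : ℕ) (hN : ∀ d, N ≤ d → 𝒜 d = ⊥) {l : A} (hl : l ∈ degGE 𝒜 1) (s t : ℕ)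
    (htN : t ≤ N)
    (hrank : Module.finrank k (LinearMap.range (LinearMap.mulLeft k (l ^ s))) =
      ∑ d ∈ Finset.range N, min (Module.finrank k (𝒜 d)) (Module.finrank k (𝒜 (d + s))))
    (hlo : ∀ d < t, Module.finrank k (𝒜 d) ≤ Module.finrank k (𝒜 (d + s)))
    (hhi : ∀ d, t ≤ d → Module.finrank k (𝒜 (d + s)) ≤ Module.finrank k (𝒜 d)) :
    (∀ d < t, ∀ x ∈ 𝒜 d, l ^ s * x ∈ degGE 𝒜 (t + s) → x = 0) ∧
      ∀ w ∈ degGE 𝒜 (t + s), ∃ u ∈ degGE 𝒜 t, l ^ s * u = w := by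
  set f := LinearMap.mulLeft k (l ^ s) with hf
  set L : Submodule k A := (Finset.range t).sup 𝒜 with hL
  have hind := iSupIndep_grading 𝒜
  have hLdim : Module.finrank k L = ∑ d ∈ Finset.range t, Module.finrank k (𝒜 d) :=
    finrank_finset_sup 𝒜 hind _
  have hUdim : Module.finrank k (degGE 𝒜 (t + s)) =
      ∑ d ∈ Finset.Ico t N, Module.finrank k (𝒜 (d + s)) := by
    rw [degGE_eq_sup 𝒜 N (N + s) (t + s) hN (by omega), finrank_finset_sup 𝒜 hind,
      Finset.sum_Ico_add' (fun d => Module.finrank k (𝒜 d))]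
  have hsum : ∑ d ∈ Finset.range N, min (Module.finrank k (𝒜 d)) (Module.finrank k (𝒜 (d + s))) =
      Module.finrank k L + Module.finrank k (degGE 𝒜 (t + s)) := by
    rw [hLdim, hUdim, ← Finset.sum_range_add_sum_Ico _ htN]
    congr 1
    · exact Finset.sum_congr rfl fun d hd => min_eq_left (hlo d (Finset.mem_range.1 hd))
    · exact Finset.sum_congr rfl fun d hd => min_eq_right (hhi d (Finset.mem_Ico.1 hd).1)
  have htop : (⊤ : Submodule k A) = L ⊔ degGE 𝒜 t := by
    apply le_antisymm _ le_top
    rw [← degGE_zero 𝒜]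
    refine iSup_le fun d => ?_
    by_cases h : d < t
    · exact (Finset.le_sup (f := 𝒜) (Finset.mem_range.2 h)).trans le_sup_left
    · exact (le_degGE 𝒜 (by omega)).trans le_sup_right
  have hrange : LinearMap.range f = L.map f ⊔ (degGE 𝒜 t).map f := by
    rw [← Submodule.map_top, htop, Submodule.map_sup]
  have hle : (degGE 𝒜 t).map f ≤ degGE 𝒜 (t + s) := by
    rintro _ ⟨x, hx, rfl⟩
    rw [add_comm]
    exact mul_mem_degGE 𝒜 (pow_mem_degGE 𝒜 hl s) hx
  have h1 := Submodule.finrank_sup_add_finrank_inf_eq (L.map f) ((degGE 𝒜 t).map f)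
  have h2 : Module.finrank k (L.map f) ≤ Module.finrank k L := Submodule.finrank_map_le f L
  have h3 := Submodule.finrank_mono hle
  rw [← hrange, hrank, hsum] at h1
  have hU : (degGE 𝒜 t).map f = degGE 𝒜 (t + s) :=
    Submodule.eq_of_le_of_finrank_eq hle (by omega)
  have hinf : L.map f ⊓ (degGE 𝒜 t).map f = ⊥ := Submodule.finrank_eq_zero.1 (by omega)
  have hker : LinearMap.ker (f.domRestrict L) = ⊥ := by
    have := LinearMap.finrank_range_add_finrank_ker (f.domRestrict L)
    rw [LinearMap.range_domRestrict] at this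
    exact Submodule.finrank_eq_zero.1 (by omega)
  refine ⟨fun d hd x hx hfx => ?_, fun w hw => ?_⟩
  · have hxL : x ∈ L := Finset.le_sup (f := 𝒜) (Finset.mem_range.2 hd) hx
    have h0 : f x ∈ L.map f ⊓ (degGE 𝒜 t).map f :=
      ⟨Submodule.mem_map_of_mem hxL, by rw [hU]; exact hfx⟩
    rw [hinf, Submodule.mem_bot] at h0
    have : (⟨x, hxL⟩ : L) ∈ LinearMap.ker (f.domRestrict L) := h0
    rw [hker, Submodule.mem_bot] at this
    exact congrArg Subtype.val this
  · rw [← hU] at hw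
    exact hw

end Filtration

/-- Let `A` be a standard graded Artinian algebra over a field `k` (i.e. `A` is
generated in degree 1 over `A_0 = k`) whose Hilbert function is unimodal.  Then
`A` has an element `ℓ ∈ m_A` of strong Lefschetz Jordan type
(`P_ℓ = H(A)^∨`) if and only if `A` has a strong Lefschetz element
`ℓ' ∈ A_1`. -/
theorem has_SLJT_iff_strongLefschetz_of_standard_unimodal
    {k A : Type*} [Field k] [CommRing A] [Algebra k A]
    (𝒜 : ℕ → Submodule k A) [GradedAlgebra 𝒜] [FiniteDimensional k A]
    (hconn : 𝒜 0 = Submodule.span k {(1 : A)})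
    (hstd : ∀ i : ℕ, 𝒜 (i + 1) = 𝒜 1 * 𝒜 i)
    (huni : Unimodal (fun i => Module.finrank k (𝒜 i))) :
    (∃ ℓ ∈ (⨆ i : ℕ, 𝒜 (i + 1)), IsJordanTypeOf (LinearMap.mulLeft k ℓ)
        (conjHilb (fun i => Module.finrank k (𝒜 i)) (Module.finrank k A))) ↔
      (∃ ℓ' : A, IsSL 𝒜 ℓ') := by
  classical
  obtain ⟨N₀, hN₀⟩ := exists_bound 𝒜
  obtain ⟨c, hc1, hc2⟩ := id huni
  obtain ⟨N, hNc, hN⟩ : ∃ N, c ≤ N ∧ ∀ d, N ≤ d → 𝒜 d = ⊥ :=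
    ⟨max N₀ c, le_max_right _ _, fun d hd => hN₀ d ((le_max_left _ _).trans hd)⟩
  have hconj := fun s => conjHilb_sum (fun i => Module.finrank k (𝒜 i)) (Module.finrank k A) N s
    huni (fun d => Submodule.finrank_le _) (fun d hd => by simp [hN d hd])
  constructor
  · rintro ⟨l, hl, -, hrk⟩
    replace hl : l ∈ degGE 𝒜 1 := hl
    have hrank : ∀ s, Module.finrank k (LinearMap.range (LinearMap.mulLeft k (l ^ s))) =
        ∑ d ∈ Finset.range N,
          min (Module.finrank k (𝒜 d)) (Module.finrank k (𝒜 (d + s))) := by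
      intro s
      rw [← hconj s, ← hrk s, LinearMap.pow_mulLeft]
    have hmul : ∀ i j, 𝒜 (i + j) = 𝒜 i * 𝒜 j := by
      intro i j
      induction i with
      | zero => rw [hconn, ← Submodule.one_eq_span, one_mul, Nat.zero_add]
      | succ i ih => rw [Nat.succ_add_eq_add_succ, Nat.add_succ, hstd, ih, hstd i, mul_assoc]
    obtain ⟨l1, hl1, z, hz, hlz⟩ := exists_leading 𝒜 hl
    have hl1pow : ∀ s, l1 ^ s ∈ 𝒜 s := fun s => by simpa using SetLike.pow_mem_graded s hl1
    -- In degrees below the peak there is no socle: nothing is killed by a power of `m_A` that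
    -- does not go beyond degree `c`.
    have hsocle : ∀ d e, d < c → d + e ≤ c → ∀ u ∈ 𝒜 d, (∀ v ∈ 𝒜 e, v * u = 0) → u = 0 := by
      intro d e hdc hde u hu hkill
      obtain ⟨t, htc, hlo, hhi, hmax⟩ := exists_threshold _ c hc1 hc2 e
      obtain ⟨hinj, -⟩ := extremal_rank 𝒜 N hN hl e t (htc.trans hNc) (hrank e) hlo hhi
      refine hinj d (hmax d hdc hde) u hu ?_
      have hF : degGE 𝒜 e ≤ LinearMap.ker (LinearMap.mulRight k u) := by
        refine iSup_le fun i => ?_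
        rw [hmul i e]
        refine Submodule.mul_le.2 fun a _ b hb => ?_
        rw [LinearMap.mem_ker, LinearMap.mulRight_apply, mul_assoc, hkill b hb, mul_zero]
      have h0 : l ^ e * u = 0 := hF (pow_mem_degGE 𝒜 hl e)
      rw [h0]
      exact zero_mem _
    refine ⟨l1, hl1, fun i s => ?_⟩
    obtain ⟨t, htc, hlo, hhi, -⟩ := exists_threshold _ c hc1 hc2 s
    obtain ⟨hinj, hsurj⟩ := extremal_rank 𝒜 N hN hl s t (htc.trans hNc) (hrank s) hlo hhi
    obtain ⟨z', hz', hpow⟩ := pow_leading 𝒜 hl1 hz hlz s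
    by_cases hit : i < t
    · rw [min_eq_left (hlo i hit)]
      have hinj1 : ∀ x ∈ 𝒜 (t - 1), l1 ^ s * x = 0 → x = 0 := by
        intro x hx h0
        refine hinj (t - 1) (by omega) x hx ?_
        rw [hpow, add_mul, h0, zero_add]
        exact degGE_antitone 𝒜 (by omega)
          (mul_mem_degGE 𝒜 hz' (le_degGE 𝒜 le_rfl hx))
      have hker : ∀ u ∈ 𝒜 i, l1 ^ s * u = 0 → u = 0 := by
        intro u hu h0
        refine hsocle i (t - 1 - i) (by omega) (by omega) u hu fun v hv => ?_
        refine hinj1 _ ?_ (by rw [mul_left_comm, h0, mul_zero])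
        have := SetLike.mul_mem_graded hv hu
        rwa [show t - 1 - i + i = t - 1 by omega] at this
      rw [← LinearMap.range_domRestrict]
      apply LinearMap.finrank_range_of_inj
      rw [← LinearMap.ker_eq_bot, LinearMap.ker_eq_bot']
      intro u hu
      exact Subtype.ext (hker u u.2 hu)
    · rw [min_eq_right (hhi i (by omega))]
      have hsurj1 : ∀ w ∈ 𝒜 (t + s), ∃ v ∈ 𝒜 t, l1 ^ s * v = w := by
        intro w hw
        obtain ⟨u, hu, huw⟩ := hsurj w (le_degGE 𝒜 le_rfl hw)
        obtain ⟨y, hy, x, hx, rfl⟩ := exists_leading 𝒜 hu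
        refine ⟨y, hy, ?_⟩
        have hmem : w - l1 ^ s * y ∈ 𝒜 (t + s) := by
          refine sub_mem hw ?_
          rw [add_comm]
          exact SetLike.mul_mem_graded (hl1pow s) hy
        have hhigh : w - l1 ^ s * y ∈ degGE 𝒜 (t + s + 1) := by
          have : w - l1 ^ s * y = l1 ^ s * x + z' * (y + x) := by
            rw [← huw, hpow]; ring
          rw [this]
          refine add_mem ?_ ?_
          · exact degGE_antitone 𝒜 (by omega)
              (mul_mem_degGE 𝒜 (le_degGE 𝒜 le_rfl (hl1pow s)) hx)
          · exact degGE_antitone 𝒜 (by omega) (mul_mem_degGE 𝒜 hz' hu)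
        exact (sub_eq_zero.1 (eq_zero_of_mem_degGE 𝒜 hmem hhigh)).symm
      have hmap : (𝒜 i).map (LinearMap.mulLeft k (l1 ^ s)) = 𝒜 (i + s) := by
        apply le_antisymm
        · rintro _ ⟨x, hx, rfl⟩
          rw [add_comm]
          exact SetLike.mul_mem_graded (hl1pow s) hx
        · rw [show i + s = (i - t) + (t + s) by omega, hmul (i - t) (t + s)]
          refine Submodule.mul_le.2 fun a ha b hb => ?_
          obtain ⟨v, hv, rfl⟩ := hsurj1 b hb
          refine ⟨a * v, ?_, ?_⟩
          · have := SetLike.mul_mem_graded ha hv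
            rwa [show i - t + t = i by omega] at this
          · rw [LinearMap.mulLeft_apply, mul_left_comm]
      rw [hmap]
  · rintro ⟨l, hl, hSL⟩
    refine ⟨l, le_degGE 𝒜 le_rfl hl, fun p hp => (Multiset.mem_filter.1 hp).2, fun s => ?_⟩
    rw [hconj s, LinearMap.pow_mulLeft, rank_homogeneous 𝒜 N hN hl s]
    exact Finset.sum_congr rfl fun d _ => hSL d s
end

section
/- Let a ≤ b and m, n be positive integers with am = bn and n | m, and let A = k[x,y]/(x^a − y^b, xy) be graded with weights w(x) = m and w(y) = n (so the relations are homogeneous). Then the conjugate of the Hilbert function of A equals the conjugate of the Hilbert function of its associated graded algebra: H(A)^∨ = H(Gr_{m_A}(A))^∨. -/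
/-- The Hilbert function of the associated graded algebra `Gr_m(A) = ⊕ mⁱ/mⁱ⁺¹`
with respect to the ideal `m`:  `H i = dim_k mⁱ/mⁱ⁺¹ = dim_k mⁱ − dim_k mⁱ⁺¹`. -/
noncomputable def grHilb (k : Type*) {A : Type*} [Field k] [CommRing A] [Algebra k A]
    (m : Ideal A) : ℕ → ℕ :=
  fun i => Module.finrank k ((m ^ i).restrictScalars k)
    - Module.finrank k ((m ^ (i + 1)).restrictScalars k)

open MvPolynomial

section Helpers

/-- If two injective families of degrees are nested, the multiset of all degrees has its
multiplicity-`(i+1)` locus equal to the larger range for `i = 0`, the smaller range for `i = 1`,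
and empty afterwards. -/
lemma ncard_superlevel {r s : ℕ} (u : Fin r → ℕ) (w : Fin s → ℕ)
    (hu : Function.Injective u) (hw : Function.Injective w)
    (huw : Set.range u ⊆ Set.range w) (i : ℕ) :
    Set.ncard {d : ℕ | i + 1 ≤ Fintype.card {p : Fin r ⊕ Fin s // Sum.elim u w p = d}} =
      if i = 0 then s else if i = 1 then r else 0 := by
  classical
  have hfib : ∀ {t : ℕ} (v : Fin t → ℕ), Function.Injective v → ∀ d,
      Fintype.card {p // v p = d} = if d ∈ Set.range v then 1 else 0 := by
    intro t v hv d
    split_ifs with h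
    · obtain ⟨p, rfl⟩ := h
      exact Fintype.card_eq_one_iff.2 ⟨⟨p, rfl⟩, fun q => Subtype.ext (hv q.2)⟩
    · exact Fintype.card_eq_zero_iff.2 ⟨fun q => h ⟨q.1, q.2⟩⟩
  have hcard : ∀ d, Fintype.card {p : Fin r ⊕ Fin s // Sum.elim u w p = d} =
      (if d ∈ Set.range u then 1 else 0) + (if d ∈ Set.range w then 1 else 0) := by
    intro d
    rw [← hfib u hu, ← hfib w hw, ← Fintype.card_sum]
    exact Fintype.card_congr Equiv.subtypeSum
  have hr : ∀ {t : ℕ} (v : Fin t → ℕ), Function.Injective v → (Set.range v).ncard = t := by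
    intro t v hv
    rw [← Set.image_univ, Set.ncard_image_of_injective _ hv, Set.ncard_univ, Nat.card_fin]
  simp only [hcard]
  split_ifs with h0 h1
  · convert hr w hw using 2
    ext d
    have := @huw d
    simp only [Set.mem_ofPred_eq]
    split_ifs <;> grind
  · convert hr u hu using 2
    ext d
    have := @huw d
    simp only [Set.mem_ofPred_eq]
    split_ifs <;> grind
  · convert Set.ncard_empty ℕ using 2
    ext d
    simp only [Set.mem_ofPred_eq, Set.mem_empty_iff_false]
    split_ifs <;> simp <;> omega

variable {k : Type} [Field k]

/-- The monomials `x, …, x^(a-1)` and `1, y, …, y^b`, whose classes form a basis of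
`k[x,y]/(x^a - y^b, xy)`. -/
noncomputable def basisMon (k : Type) [Field k] (a b : ℕ) :
    Fin (a - 1) ⊕ Fin (b + 1) → MvPolynomial (Fin 2) k :=
  Sum.elim (fun i => X 0 ^ (i.1 + 1)) (fun j => X 1 ^ j.1)

/-- Linear functionals dual to `basisMon` that vanish on `(x^a - y^b, xy)`: the coefficient of
the given monomial, except that for `y^b` the coefficient of `x^a` is added. -/
noncomputable def dualFun (k : Type) [Field k] (a b : ℕ) :
    Fin (a - 1) ⊕ Fin (b + 1) → (MvPolynomial (Fin 2) k →ₗ[k] k) :=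
  Sum.elim (fun i => lcoeff k (Finsupp.single 0 (i.1 + 1)))
    (fun j => lcoeff k (Finsupp.single 1 j.1) +
      if j.1 = b then lcoeff k (Finsupp.single 0 a) else 0)

lemma dualFun_basisMon {a b : ℕ} (ha : 0 < a) (p q : Fin (a - 1) ⊕ Fin (b + 1)) :
    dualFun k a b p (basisMon k a b q) = if q = p then 1 else 0 := by
  rcases p with p | p <;> rcases q with q | q <;>
    simp only [dualFun, basisMon, Sum.elim_inl, Sum.elim_inr, LinearMap.add_apply] <;>
    (try split_ifs) <;>
    simp only [lcoeff_apply, LinearMap.zero_apply, coeff_X_pow, Finsupp.single_eq_single_iff,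
      Sum.inl.injEq, Sum.inr.injEq, Fin.ext_iff, reduceCtorEq] at * <;>
    grind

lemma coeff_X_pow_mul_ite (i : Fin 2) (s : ℕ) (c : Fin 2 →₀ ℕ) (g : MvPolynomial (Fin 2) k) :
    coeff c (X i ^ s * g) = if s ≤ c i then coeff (c - Finsupp.single i s) g else 0 := by
  rw [X_pow_eq_monomial, coeff_monomial_mul']
  simp [Finsupp.single_le_iff]

lemma dualFun_eq_zero {a b : ℕ} (ha : 0 < a) (hb : 0 < b) (p : Fin (a - 1) ⊕ Fin (b + 1))
    {f : MvPolynomial (Fin 2) k}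
    (hf : f ∈ Ideal.span {X 0 ^ a - X 1 ^ b, X 0 * X 1}) : dualFun k a b p f = 0 := by
  obtain ⟨g, h, rfl⟩ := Ideal.mem_span_pair.1 hf
  have hrw : g * (X 0 ^ a - X 1 ^ b) + h * (X 0 * X 1) =
      X 0 ^ a * g - X 1 ^ b * g + X 0 ^ 1 * (X 1 ^ 1 * h) := by ring
  rw [hrw]
  have h1 : ¬ a ≤ 0 := by omega
  have h2 : ¬ b ≤ 0 := by omega
  rcases p with p | p
  · have h3 : ¬ a ≤ p.1 + 1 := by omega
    simp only [dualFun, Sum.elim_inl, lcoeff_apply, coeff_add, coeff_sub, coeff_X_pow_mul_ite]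
    simp [h2, h3]
  · simp only [dualFun, Sum.elim_inr, LinearMap.add_apply]
    split_ifs with hp
    · simp only [lcoeff_apply, coeff_add, coeff_sub, coeff_X_pow_mul_ite]
      simp [h1, h2, hp]
    · have h3 : ¬ b ≤ p.1 := by omega
      simp only [lcoeff_apply, coeff_add, coeff_sub, coeff_X_pow_mul_ite]
      simp [h1, h3]

lemma linearIndependent_basisMon {a b : ℕ} (ha : 0 < a) (hb : 0 < b)
    {I : Ideal (MvPolynomial (Fin 2) k)}
    (hI : I = Ideal.span {X 0 ^ a - X 1 ^ b, X 0 * X 1}) :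
    LinearIndependent k (fun p => Ideal.Quotient.mkₐ k I (basisMon k a b p)) := by
  rw [Fintype.linearIndependent_iff]
  intro g hg p
  have hmem : ∑ q, g q • basisMon k a b q ∈ I := by
    rw [← Ideal.Quotient.eq_zero_iff_mem, ← Ideal.Quotient.mkₐ_eq_mk k, map_sum]
    simpa only [map_smul] using hg
  rw [hI] at hmem
  have h := dualFun_eq_zero ha hb p hmem
  simpa only [map_sum, map_smul, dualFun_basisMon ha, smul_eq_mul, mul_ite, mul_one, mul_zero,
    Finset.sum_ite_eq', Finset.mem_univ, if_true] using h

/-- The total degree of a basis monomial; it is also its order with respect to the maximal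
ideal. -/
def ordFun (a b : ℕ) : Fin (a - 1) ⊕ Fin (b + 1) → ℕ :=
  Sum.elim (fun i => i.1 + 1) (fun j => j.1)

/-- The weighted degree of a basis monomial for `w(x) = m`, `w(y) = n`. -/
def wtFun (a b m n : ℕ) : Fin (a - 1) ⊕ Fin (b + 1) → ℕ :=
  Sum.elim (fun i => (i.1 + 1) * m) (fun j => j.1 * n)

/-- Every monomial is either zero in the quotient or a basis monomial of the same weight and
of at least the same total degree; the degree grows only through `x^a = y^b`, as `a ≤ b`. -/
lemma mk_monomial {a b m n : ℕ} (ha : 0 < a) (hab : a ≤ b) (heq : a * m = b * n)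
    {I : Ideal (MvPolynomial (Fin 2) k)}
    (hI : I = Ideal.span {X 0 ^ a - X 1 ^ b, X 0 * X 1}) (i j : ℕ) :
    Ideal.Quotient.mkₐ k I (X 0 ^ i * X 1 ^ j) = 0 ∨
      ∃ p, Ideal.Quotient.mkₐ k I (X 0 ^ i * X 1 ^ j) =
          Ideal.Quotient.mkₐ k I (basisMon k a b p) ∧
        wtFun a b m n p = i * m + j * n ∧ i + j ≤ ordFun a b p := by
  have hxy : Ideal.Quotient.mkₐ k I (X 0) * Ideal.Quotient.mkₐ k I (X 1) = 0 := by
    rw [← map_mul, Ideal.Quotient.mkₐ_eq_mk, Ideal.Quotient.eq_zero_iff_mem, hI]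
    exact Ideal.subset_span (by simp)
  have hpow : Ideal.Quotient.mkₐ k I (X 0) ^ a = Ideal.Quotient.mkₐ k I (X 1) ^ b := by
    rw [← map_pow, ← map_pow, Ideal.Quotient.mkₐ_eq_mk, Ideal.Quotient.eq, hI]
    exact Ideal.subset_span (by simp)
  simp only [map_mul, map_pow]
  set x := Ideal.Quotient.mkₐ k I (X 0)
  set y := Ideal.Quotient.mkₐ k I (X 1)
  rcases i with _ | i
  · by_cases hj : j ≤ b
    · right
      exact ⟨Sum.inr ⟨j, by omega⟩, by simp [basisMon, y], by simp [wtFun], by simp [ordFun]⟩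
    · left
      obtain ⟨t, rfl⟩ := Nat.exists_eq_add_of_lt (not_le.1 hj)
      obtain ⟨a', rfl⟩ := Nat.exists_eq_add_of_lt ha
      calc x ^ 0 * y ^ (b + t + 1) = y ^ b * (y * y ^ t) := by ring
        _ = x ^ (0 + a' + 1) * (y * y ^ t) := by rw [hpow]
        _ = x ^ a' * (x * y) * y ^ t := by ring
        _ = 0 := by rw [hxy]; ring
  rcases j with _ | j
  · rcases lt_trichotomy (i + 1) a with h | h | h
    · right
      exact ⟨Sum.inl ⟨i, by omega⟩, by simp [basisMon, x], by simp [wtFun], by simp [ordFun]⟩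
    · right
      refine ⟨Sum.inr ⟨b, by omega⟩, ?_, ?_, ?_⟩
      · rw [h, hpow]; simp [basisMon, y]
      · rw [h, heq]; simp [wtFun]
      · simp only [ordFun, Sum.elim_inr]; omega
    · left
      obtain ⟨t, ht⟩ := Nat.exists_eq_add_of_lt h
      obtain ⟨b', rfl⟩ := Nat.exists_eq_add_of_lt (ha.trans_le hab)
      rw [ht]
      calc x ^ (a + t + 1) * y ^ 0 = x ^ a * (x * x ^ t) := by ring
        _ = y ^ (0 + b' + 1) * (x * x ^ t) := by rw [hpow]
        _ = y ^ b' * (x * y) * x ^ t := by ring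
        _ = 0 := by rw [hxy]; ring
  · left
    calc x ^ (i + 1) * y ^ (j + 1) = x ^ i * (x * y) * y ^ j := by ring
      _ = 0 := by rw [hxy]; ring

/-- The image of a polynomial lies in the span of the basis monomials satisfying `Q` as soon as
each of its monomials satisfies a condition that `mk_monomial` transports to `Q`. -/
lemma mk_mem_span {a b m n : ℕ} (ha : 0 < a) (hab : a ≤ b) (heq : a * m = b * n)
    {I : Ideal (MvPolynomial (Fin 2) k)}
    (hI : I = Ideal.span {X 0 ^ a - X 1 ^ b, X 0 * X 1})
    (Q : Fin (a - 1) ⊕ Fin (b + 1) → Prop) (f : MvPolynomial (Fin 2) k)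
    (hf : ∀ c ∈ f.support, ∀ p, wtFun a b m n p = c 0 * m + c 1 * n →
      c 0 + c 1 ≤ ordFun a b p → Q p) :
    Ideal.Quotient.mkₐ k I f ∈
      Submodule.span k ((fun p => Ideal.Quotient.mkₐ k I (basisMon k a b p)) '' {p | Q p}) := by
  rw [f.as_sum, map_sum]
  refine Submodule.sum_mem _ fun c hc => ?_
  have hmon : monomial c (coeff c f) = coeff c f • (X 0 ^ c 0 * X 1 ^ c 1) := by
    rw [monomial_eq, Finsupp.prod_fintype _ _ (by simp), Fin.prod_univ_two, smul_eq_C_mul]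
  rw [hmon, map_smul]
  refine Submodule.smul_mem _ _ ?_
  rcases mk_monomial ha hab heq hI (c 0) (c 1) with h | ⟨p, h, hw, ho⟩
  · rw [h]; exact Submodule.zero_mem _
  · rw [h]
    exact Submodule.subset_span ⟨p, hf c hc p hw ho, rfl⟩

lemma finrank_span_basisMon {a b : ℕ} (ha : 0 < a) (hb : 0 < b)
    {I : Ideal (MvPolynomial (Fin 2) k)}
    (hI : I = Ideal.span {X 0 ^ a - X 1 ^ b, X 0 * X 1})
    (Q : Fin (a - 1) ⊕ Fin (b + 1) → Prop) [DecidablePred Q] :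
    Module.finrank k (Submodule.span k
      ((fun p => Ideal.Quotient.mkₐ k I (basisMon k a b p)) '' {p | Q p})) =
      Fintype.card {p // Q p} := by
  have h := (linearIndependent_basisMon ha hb hI).comp
    (Subtype.val : {p // Q p} → _) Subtype.val_injective
  rw [← finrank_span_eq_card h, Set.range_comp, Subtype.range_coe_subtype]

lemma span_weighted_eq {a b m n : ℕ} (ha : 0 < a) (hab : a ≤ b) (heq : a * m = b * n)
    {I : Ideal (MvPolynomial (Fin 2) k)}
    (hI : I = Ideal.span {X 0 ^ a - X 1 ^ b, X 0 * X 1}) (d : ℕ) :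
    Submodule.span k ((Ideal.Quotient.mk I) '' {f | f.IsWeightedHomogeneous ![m, n] d}) =
      Submodule.span k ((fun p => Ideal.Quotient.mkₐ k I (basisMon k a b p)) ''
        {p | wtFun a b m n p = d}) := by
  apply le_antisymm
  · rw [Submodule.span_le]
    rintro _ ⟨f, hf, rfl⟩
    refine mk_mem_span ha hab heq hI _ f fun c hc p hp _ => ?_
    have := hf (mem_support_iff.1 hc)
    rw [hp, ← this]
    simp [Finsupp.weight_apply, Finsupp.sum_fintype]
  · apply Submodule.span_mono
    rintro _ ⟨p, rfl, rfl⟩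
    refine ⟨_, ?_, rfl⟩
    rcases p with p | p
    · simpa [basisMon, wtFun] using
        (isWeightedHomogeneous_X k ![m, n] (0 : Fin 2)).pow (p.1 + 1)
    · simpa [basisMon, wtFun] using
        (isWeightedHomogeneous_X k ![m, n] (1 : Fin 2)).pow p.1

lemma pow_eq_span {a b m n : ℕ} (ha : 0 < a) (hab : a ≤ b) (heq : a * m = b * n)
    {I : Ideal (MvPolynomial (Fin 2) k)}
    (hI : I = Ideal.span {X 0 ^ a - X 1 ^ b, X 0 * X 1})
    {mI : Ideal (MvPolynomial (Fin 2) k ⧸ I)}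
    (hmI : mI = Ideal.span {Ideal.Quotient.mk I (X 0), Ideal.Quotient.mk I (X 1)}) (s : ℕ) :
    (mI ^ s).restrictScalars k =
      Submodule.span k ((fun p => Ideal.Quotient.mkₐ k I (basisMon k a b p)) ''
        {p | s ≤ ordFun a b p}) := by
  apply le_antisymm
  · have hmap : mI = (idealOfVars (Fin 2) k).map (Ideal.Quotient.mk I) := by
      rw [hmI, idealOfVars, Ideal.map_span]
      congr 1
      ext z
      simp [Fin.exists_fin_two, eq_comm]
    intro z hz
    rw [Submodule.restrictScalars_mem, hmap, ← Ideal.map_pow,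
      Ideal.mem_map_iff_of_surjective _ Ideal.Quotient.mk_surjective] at hz
    obtain ⟨f, hf, rfl⟩ := hz
    refine mk_mem_span ha hab heq hI _ f fun c hc p _ hp => ?_
    have := (mem_pow_idealOfVars_iff s f).1 hf c hc
    rw [Finsupp.degree_eq_sum, Fin.sum_univ_two] at this
    exact this.trans hp
  · rw [Submodule.span_le]
    rintro _ ⟨p, hp, rfl⟩
    refine Ideal.pow_le_pow_right hp ?_
    rcases p with p | p
    · simp only [basisMon, ordFun, Sum.elim_inl, map_pow]
      exact Ideal.pow_mem_pow (hmI ▸ Ideal.subset_span (by simp)) _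
    · simp only [basisMon, ordFun, Sum.elim_inr, map_pow]
      exact Ideal.pow_mem_pow (hmI ▸ Ideal.subset_span (by simp)) _

end Helpers

/-- Let `a ≤ b` and `m`, `n` be positive integers with `a·m = b·n` and `n ∣ m`,
and let `A = k[x,y]/(x^a − y^b, xy)` be graded with weights `w(x) = m`,
`w(y) = n` (so the relations are homogeneous).  Then the conjugate of the
Hilbert function of `A` equals the conjugate of the Hilbert function of its
associated graded algebra:  `H(A)^∨ = H(Gr_{m_A}(A))^∨`. -/
theorem conj_hilbert_eq_conj_hilbert_assocGraded
    {k : Type} [Field k] (a b m n : ℕ)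
    (ha : 0 < a) (hb : 0 < b) (hm : 0 < m) (hn : 0 < n)
    (hab : a ≤ b) (heq : a * m = b * n) (hdvd : n ∣ m)
    (I : Ideal (MvPolynomial (Fin 2) k))
    (hI : I = Ideal.span {X 0 ^ a - X 1 ^ b, X 0 * X 1})
    (𝒜 : ℕ → Submodule k (MvPolynomial (Fin 2) k ⧸ I))
    (h𝒜 : ∀ d : ℕ, 𝒜 d = Submodule.span k
      ((Ideal.Quotient.mk I) '' {f | f.IsWeightedHomogeneous ![m, n] d}))
    (mI : Ideal (MvPolynomial (Fin 2) k ⧸ I))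
    (hmI : mI = Ideal.span {Ideal.Quotient.mk I (X 0), Ideal.Quotient.mk I (X 1)}) :
    conjHilb (fun d => Module.finrank k (𝒜 d))
        (Module.finrank k (MvPolynomial (Fin 2) k ⧸ I)) =
      conjHilb (grHilb k mI) (Module.finrank k (MvPolynomial (Fin 2) k ⧸ I)) := by
  have hH : ∀ d, Module.finrank k (𝒜 d) = Fintype.card {p // wtFun a b m n p = d} := by
    intro d
    rw [h𝒜, span_weighted_eq ha hab heq hI, finrank_span_basisMon ha hb hI]
  have hG : ∀ s, grHilb k mI s = Fintype.card {p // ordFun a b p = s} := by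
    intro s
    rw [grHilb, pow_eq_span ha hab heq hI hmI, pow_eq_span ha hab heq hI hmI,
      finrank_span_basisMon ha hb hI, finrank_span_basisMon ha hb hI]
    simp only [Fintype.card_subtype]
    rw [Nat.sub_eq_iff_eq_add, ← Finset.card_union_of_disjoint]
    · congr 1
      ext p
      simp only [Finset.mem_filter, Finset.mem_union, Finset.mem_univ, true_and]
      omega
    · rw [Finset.disjoint_filter]
      intros; omega
    · apply Finset.card_le_card
      intro p
      simp only [Finset.mem_filter, Finset.mem_univ, true_and]
      omega
  obtain ⟨q, rfl⟩ := hdvd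
  -- Cancelling `n` in `a * (n * q) = b * n`: the weight of `x^i` is that of `y^(i * q)`.
  have hbq : b = a * q := by
    apply Nat.eq_of_mul_eq_mul_right hn
    rw [← heq]; ring
  have hwt := ncard_superlevel (fun i : Fin (a - 1) => (i.1 + 1) * (n * q))
    (fun j : Fin (b + 1) => j.1 * n)
    (fun i j h => Fin.ext (by simpa using Nat.eq_of_mul_eq_mul_right hm h))
    (fun i j h => Fin.ext (Nat.eq_of_mul_eq_mul_right hn h))
    (by
      rintro _ ⟨i, rfl⟩
      have hi : (i.1 + 1) * q ≤ b := hbq ▸ Nat.mul_le_mul_right q (by omega)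
      exact ⟨⟨(i.1 + 1) * q, by omega⟩, by simp only []; ring⟩)
  have hord := ncard_superlevel (fun i : Fin (a - 1) => i.1 + 1)
    (fun j : Fin (b + 1) => j.1)
    (fun i j h => Fin.ext (by simpa using h)) (fun i j h => Fin.ext h)
    (by
      rintro _ ⟨i, rfl⟩
      exact ⟨⟨i.1 + 1, by omega⟩, rfl⟩)
  unfold conjHilb
  congr 1
  refine Multiset.map_congr rfl fun i _ => ?_
  simp only [hH, hG]
  exact (hwt i).trans (hord i).symm
end

section
/- (Clebsch–Gordan) Let m ≤ n be positive integers, let k be a field with char k = 0 or char k > m + n − 1, and let R(m,n) = k[x,y]/(x^m, y^n) with the standard grading. Then H(R(m,n)) = (1, 2, …, m−1, m, m, …, m, m−1, …, 2, 1) (with m occurring n − m + 1 times), and the linear form ℓ = x + y has Jordan type P_ℓ = (n+m−1, n+m−3, …, n−m+1) = H(R(m,n))^∨; in particular ℓ is a strong Lefschetz element of R(m,n). -/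
/-! ### The Wronskian argument -/

open Polynomial in
/-- Injectivity of `×ℓ ^ j` in degree `i` after setting `y = 1`. Modulo `(x ^ m, y ^ n)`, a form of
degree `D` vanishes iff its coefficients at `x ^ t * y ^ (D - t)` vanish whenever `t < m` and
`D < n + t`; here `p` has degree `i` and `(X + 1) ^ j * p` has degree `i + j`. -/
lemma univariate_key {k : Type*} [Field k] (m n i j : ℕ)
    (hchar : ∀ t : ℕ, 0 < t → t ≤ i + j → (t : k) ≠ 0)
    (hij : 2 * i + j + 2 ≤ m + n) (p : k[X]) (hp : p.natDegree ≤ i)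
    (h : ∀ t < m, i + j < n + t → ((X + 1) ^ j * p).coeff t = 0) :
    ∀ t < m, i < n + t → p.coeff t = 0 := by
  set F : k[X] := (X + 1) ^ j * p with hF
  have hX1 : (X + 1 : k[X]).natDegree = 1 := by simpa using natDegree_X_add_C (1 : k)
  have hX0 : (X + 1 : k[X]) ≠ 0 := by
    intro h0; rw [h0] at hX1; simp at hX1
  have hFdeg : F.natDegree ≤ i + j := by
    refine natDegree_mul_le.trans ?_
    have := natDegree_pow_le (p := (X + 1 : k[X])) (n := j)
    rw [hX1] at this
    omega
  -- `F = X ^ m * Q + H` with `H` the part of degree `< m`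
  set Q : k[X] := F /ₘ X ^ m with hQ
  set H : k[X] := F %ₘ X ^ m with hH
  have hFQ : F = H + X ^ m * Q := (modByMonic_add_div F (X ^ m)).symm
  have hHlt : H.degree < m := by
    have := degree_modByMonic_lt F (monic_X_pow (R := k) m)
    rwa [degree_X_pow] at this
  have hHcoeff : ∀ t < m, H.coeff t = F.coeff t := by
    intro t ht
    rw [hFQ, coeff_add, coeff_X_pow_mul', if_neg (by omega), add_zero]
  have hHbig : ∀ t, m ≤ t → H.coeff t = 0 := fun t ht =>
    coeff_eq_zero_of_degree_lt (hHlt.trans_le (by exact_mod_cast ht))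
  have hHz : ∀ t, i + j < n + t → H.coeff t = 0 := by
    intro t ht
    by_cases htm : t < m
    · rw [hHcoeff t htm, h t htm ht]
    · exact hHbig t (by omega)
  by_cases hH0 : H = 0
  · -- `X ^ m` divides `F`, hence `p`
    have hdvd : X ^ m ∣ F := ⟨Q, by rw [hFQ, hH0, zero_add]⟩
    have hcop : IsCoprime ((X : k[X]) ^ m) ((X + 1) ^ j) :=
      IsCoprime.pow ⟨-1, 1, by ring⟩
    have := hcop.dvd_of_dvd_mul_left hdvd
    intro t ht _
    exact X_pow_dvd_iff.1 this t ht
  have hHn : n + H.natDegree ≤ i + j := by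
    by_contra hc
    exact hH0 (leadingCoeff_eq_zero.1 (hHz _ (by omega)))
  have hHm : H.natDegree < m := by
    by_contra hc
    exact hH0 (leadingCoeff_eq_zero.1 (hHbig _ (by omega)))
  by_cases hQ0 : Q = 0
  · -- `F = H` has small degree, hence so does `p`
    have hFH : F = H := by rw [hFQ, hQ0]; simp
    have hp0 : p ≠ 0 := by
      rintro rfl; apply hH0; rw [← hFH, hF, mul_zero]
    have : F.natDegree = j + p.natDegree := by
      rw [hF, natDegree_mul (pow_ne_zero _ hX0) hp0, natDegree_pow, hX1, mul_one]
    intro t _ ht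
    apply coeff_eq_zero_of_natDegree_lt
    rw [hFH] at this
    omega
  exfalso
  set G : k[X] := X ^ m * Q with hG
  have hG0 : G ≠ 0 := mul_ne_zero (pow_ne_zero _ X_ne_zero) hQ0
  have hGm : m ≤ G.natDegree := by
    rw [hG, natDegree_mul (pow_ne_zero _ X_ne_zero) hQ0, natDegree_X_pow]; omega
  have hGdeg : G.natDegree ≤ i + j := by
    have : G = F - H := by rw [hFQ]; ring
    rw [this]
    exact (natDegree_sub_le _ _).trans (max_le hFdeg (by omega))
  set W : k[X] := wronskian H G with hW
  -- `0 < deg G - deg H ≤ i + j` is nonzero in `k`, so the top-degree terms in `W` do not cancel.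
  have hcoeff : W.coeff (H.natDegree + (G.natDegree - 1)) =
      ((G.natDegree - H.natDegree : ℕ) : k) * (H.leadingCoeff * G.leadingCoeff) := by
    have e1 : (H * derivative G).coeff (H.natDegree + (G.natDegree - 1)) =
        H.leadingCoeff * (G.leadingCoeff * (G.natDegree : k)) := by
      rw [coeff_mul_add_eq_of_natDegree_le le_rfl (natDegree_derivative_le _), coeff_derivative,
        Nat.sub_add_cancel (by omega), ← Nat.cast_succ, Nat.succ_eq_add_one,
        Nat.sub_add_cancel (by omega)]
      rfl
    have e2 : (derivative H * G).coeff (H.natDegree + (G.natDegree - 1)) =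
        H.leadingCoeff * (H.natDegree : k) * G.leadingCoeff := by
      rcases Nat.eq_zero_or_pos H.natDegree with h0 | h0
      · rw [eq_C_of_natDegree_eq_zero h0]; simp
      · rw [show H.natDegree + (G.natDegree - 1) = (H.natDegree - 1) + G.natDegree by omega,
          coeff_mul_add_eq_of_natDegree_le (natDegree_derivative_le _) le_rfl, coeff_derivative,
        Nat.sub_add_cancel (by omega), ← Nat.cast_succ, Nat.succ_eq_add_one,
        Nat.sub_add_cancel (by omega)]
        rfl
    rw [hW, wronskian, coeff_sub, e1, e2, Nat.cast_sub (by omega)]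
    ring
  have hW0 : W ≠ 0 := by
    intro h0
    rw [h0, coeff_zero] at hcoeff
    refine mul_ne_zero (hchar _ (by omega) (by omega))
      (mul_ne_zero (leadingCoeff_ne_zero.2 hH0) (leadingCoeff_ne_zero.2 hG0)) hcoeff.symm
  have hWdeg : W.natDegree < H.natDegree + G.natDegree := natDegree_wronskian_lt_add hW0
  have hWF : W = F * derivative G - derivative F * G := by
    rw [hW, wronskian, hFQ, derivative_add]; ring
  have d1 : (X + 1 : k[X]) ^ (j - 1) ∣ W := by
    have a : (X + 1 : k[X]) ^ (j - 1) ∣ F := (pow_dvd_pow _ (Nat.sub_le _ _)).mul_right _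
    have b : (X + 1 : k[X]) ^ (j - 1) ∣ derivative F := by
      rw [hF, derivative_mul, derivative_pow]
      exact dvd_add (((dvd_mul_left _ _).mul_right _).mul_right _)
        ((pow_dvd_pow _ (Nat.sub_le _ _)).mul_right _)
    rw [hWF]
    exact dvd_sub (a.mul_right _) (b.mul_right _)
  have d2 : (X : k[X]) ^ (m - 1) ∣ W := by
    have a : (X : k[X]) ^ (m - 1) ∣ G := (pow_dvd_pow _ (Nat.sub_le _ _)).mul_right _
    have b : (X : k[X]) ^ (m - 1) ∣ derivative G := by
      rw [hG, derivative_mul, derivative_pow]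
      exact dvd_add (((dvd_mul_left _ _).mul_right _).mul_right _)
        ((pow_dvd_pow _ (Nat.sub_le _ _)).mul_right _)
    rw [hWF]
    exact dvd_sub (b.mul_left _) (a.mul_left _)
  -- `X ^ (m - 1) * (X + 1) ^ (j - 1)` divides `W`, but `deg W < deg H + deg G ≤ 2 * (i + j) - n`.
  have hcop : IsCoprime ((X : k[X]) ^ (m - 1)) ((X + 1) ^ (j - 1)) :=
    IsCoprime.pow ⟨-1, 1, by ring⟩
  have := natDegree_le_of_dvd (hcop.mul_dvd d2 d1) hW0
  rw [natDegree_mul (pow_ne_zero _ X_ne_zero) (pow_ne_zero _ hX0), natDegree_X_pow,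
    natDegree_pow, hX1] at this
  omega

/-! ### Counting -/

/-- The degreewise ranks of `×ℓ ^ j` add up to the rank predicted by the Jordan type: both sides
count the pairs `(i, t)` with `t < m` and `t ≤ i ≤ m + n - 2 - j - t`. -/
lemma sum_rank (m n j : ℕ) :
    ∑ i ∈ Finset.range (m + n),
      min (min (i + 1) (min m (m + n - 1 - i))) (min (i + j + 1) (min m (m + n - 1 - (i + j)))) =
    ∑ t ∈ Finset.range m, (m + n - 1 - 2 * t - j) := by
  have h1 : ∀ i ∈ Finset.range (m + n),
      min (min (i + 1) (min m (m + n - 1 - i))) (min (i + j + 1) (min m (m + n - 1 - (i + j)))) =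
      ((Finset.range m).filter (fun t => t ≤ i ∧ i + j + t + 2 ≤ m + n)).card := by
    intro i _
    rw [show (Finset.range m).filter (fun t => t ≤ i ∧ i + j + t + 2 ≤ m + n) =
      Finset.range (min (min (i + 1) (min m (m + n - 1 - i)))
        (min (i + j + 1) (min m (m + n - 1 - (i + j))))) by ext t; simp; omega, Finset.card_range]
  have h2 : ∀ t ∈ Finset.range m, m + n - 1 - 2 * t - j =
      ((Finset.range (m + n)).filter (fun i => t ≤ i ∧ i + j + t + 2 ≤ m + n)).card := by
    intro t ht
    rw [show (Finset.range (m + n)).filter (fun i => t ≤ i ∧ i + j + t + 2 ≤ m + n) =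
      Finset.Ico t (m + n - 1 - j - t) by ext; simp; omega, Nat.card_Ico]
    omega
  rw [Finset.sum_congr rfl h1, Finset.sum_congr rfl h2]
  exact Finset.sum_card_bipartiteAbove_eq_sum_card_bipartiteBelow _

lemma card_fiber (m n d : ℕ) (hm : 0 < m) (hmn : m ≤ n) :
    (Finset.univ.filter (fun q : Fin m × Fin n => (q.1 : ℕ) + q.2 = d)).card =
      min (d + 1) (min m (m + n - 1 - d)) := by
  have : (Finset.univ.filter (fun q : Fin m × Fin n => (q.1 : ℕ) + q.2 = d)).card =
      (Finset.Ico (d + 1 - n) (min m (d + 1))).card := by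
    refine Finset.card_bij (fun q _ => (q.1 : ℕ)) ?_ ?_ ?_
    · rintro ⟨⟨a, ha⟩, ⟨b, hb⟩⟩ h; simp at h ⊢; omega
    · rintro ⟨⟨a, ha⟩, ⟨b, hb⟩⟩ h ⟨⟨a', ha'⟩, ⟨b', hb'⟩⟩ h' e
      simp at h h' e ⊢; omega
    · intro a h; simp at h
      exact ⟨⟨⟨a, by omega⟩, ⟨d - a, by omega⟩⟩, by simp; omega, rfl⟩
  rw [this, Nat.card_Ico]; omega

open MvPolynomial

/-! ### Forms in two variables modulo `(x ^ m, y ^ n)` -/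

/-- The exponent vector of the monomial `x ^ a * y ^ b`. -/
noncomputable def expo (a b : ℕ) : Fin 2 →₀ ℕ := Finsupp.single 0 a + Finsupp.single 1 b

@[simp] lemma expo_zero (a b : ℕ) : expo a b 0 = a := by simp [expo]
@[simp] lemma expo_one (a b : ℕ) : expo a b 1 = b := by simp [expo]

lemma eq_expo (e : Fin 2 →₀ ℕ) : e = expo (e 0) (e 1) := by
  ext i; fin_cases i <;> simp

lemma mem_ideal_iff {k : Type*} [Field k] (m n : ℕ) (f : MvPolynomial (Fin 2) k) :
    f ∈ Ideal.span {X 0 ^ m, X 1 ^ n} ↔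
      ∀ e : Fin 2 →₀ ℕ, e 0 < m → e 1 < n → coeff e f = 0 := by
  have hset : ({X 0 ^ m, X 1 ^ n} : Set (MvPolynomial (Fin 2) k)) =
      (fun s => monomial s (1 : k)) '' {Finsupp.single 0 m, Finsupp.single 1 n} := by
    simp [Set.image_pair, X_pow_eq_monomial]
  rw [hset, mem_ideal_span_monomial_image]
  constructor
  · intro h e h0 h1
    by_contra hc
    obtain ⟨s, hs, hle⟩ := h e (mem_support_iff.2 hc)
    rcases hs with rfl | rfl
    · have := hle 0; simp at this; omega
    · have := hle 1; simp at this; omega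
  · intro h e he
    by_cases h0 : e 0 < m
    · by_cases h1 : e 1 < n
      · exact absurd (h e h0 h1) (mem_support_iff.1 he)
      · exact ⟨_, Or.inr rfl, Finsupp.single_le_iff.2 (by omega)⟩
    · exact ⟨_, Or.inl rfl, Finsupp.single_le_iff.2 (by omega)⟩

/-- Setting `y = 1` in a binary form of degree `D` loses no information: the coefficient of `X ^ t`
is that of `x ^ t * y ^ (D - t)`. -/
lemma coeff_dehomogenize {k : Type*} [Field k] {D : ℕ} {f : MvPolynomial (Fin 2) k}
    (hf : f.IsHomogeneous D) (t : ℕ) :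
    (aeval ![(Polynomial.X : Polynomial k), 1] f).coeff t =
      if t ≤ D then coeff (expo t (D - t)) f else 0 := by
  have hdeg : ∀ e ∈ f.support, e 0 + e 1 = D := by
    intro e he
    have := hf (mem_support_iff.1 he)
    simpa [Finsupp.weight_apply, Finsupp.sum_fintype] using this
  conv_lhs => rw [f.as_sum]
  have hmon : ∀ e : Fin 2 →₀ ℕ,
      (aeval ![(Polynomial.X : Polynomial k), 1] (monomial e (coeff e f))).coeff t =
        if e 0 = t then coeff e f else 0 := by
    intro e
    rw [aeval_monomial, Finsupp.prod_fintype _ _ (by simp)]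
    simp [Polynomial.coeff_X_pow, eq_comm]
  rw [map_sum, Polynomial.finsetSum_coeff, Finset.sum_congr rfl (fun e _ => hmon e)]
  split_ifs with ht
  · rw [Finset.sum_eq_single (expo t (D - t))]
    · simp
    · intro e he hne
      rw [if_neg]
      intro h0
      apply hne
      rw [eq_expo e, h0, show e 1 = D - t by have := hdeg e he; omega]
    · intro h
      rw [if_pos (by simp), notMem_support_iff.1 h]
  · refine Finset.sum_eq_zero fun e he => if_neg ?_
    have := hdeg e he
    omega

/-- If `2 * i + j ≤ m + n - 2`, multiplication by `(x + y) ^ j` is injective on degree `i`. -/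
lemma form_key {k : Type*} [Field k] (m n i j : ℕ)
    (hchar : ∀ t : ℕ, 0 < t → t ≤ i + j → (t : k) ≠ 0)
    (hij : 2 * i + j + 2 ≤ m + n) (f : MvPolynomial (Fin 2) k) (hf : f.IsHomogeneous i)
    (h : (X 0 + X 1) ^ j * f ∈ Ideal.span {X 0 ^ m, X 1 ^ n}) :
    f ∈ Ideal.span {X 0 ^ m, X 1 ^ n} := by
  have hg : ((X 0 + X 1) ^ j * f).IsHomogeneous (i + j) := by
    have := ((((isHomogeneous_X k (0 : Fin 2)).add (isHomogeneous_X k (1 : Fin 2))).pow j).mul hf)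
    rwa [one_mul, add_comm j i] at this
  rw [mem_ideal_iff] at h ⊢
  have key := univariate_key m n i j hchar hij
    (aeval ![(Polynomial.X : Polynomial k), 1] f)
    (Polynomial.natDegree_le_iff_coeff_eq_zero.2 fun t ht => by
      rw [coeff_dehomogenize hf, if_neg (by omega)])
    (fun t ht hn => by
      have := coeff_dehomogenize hg t
      simp only [map_mul, map_pow, map_add, aeval_X, Matrix.cons_val_zero,
        Matrix.cons_val_one] at this
      rw [this]
      split_ifs with hle
      · exact h _ (by simpa using ht) (by simp; omega)
      · rfl)
  intro e h0 h1
  by_contra hc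
  have hdeg : e 0 + e 1 = i := by
    simpa [Finsupp.weight_apply, Finsupp.sum_fintype] using hf hc
  have := key (e 0) h0 (by omega)
  rw [coeff_dehomogenize hf, if_pos (by omega), ← hdeg, Nat.add_sub_cancel_left, ← eq_expo] at this
  exact hc this

/-! ### The monomial basis of the quotient -/

/-- The residue class of the monomial `x ^ a * y ^ b` with `a < m`, `b < n`, where
`q = (a, b)`. -/
noncomputable def mon {k : Type*} [Field k] (I : Ideal (MvPolynomial (Fin 2) k)) (m n : ℕ)
    (q : Fin m × Fin n) : MvPolynomial (Fin 2) k ⧸ I :=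
  Ideal.Quotient.mk I (monomial (expo q.1 q.2) 1)

lemma mon_linearIndependent {k : Type*} [Field k] (m n : ℕ) (I : Ideal (MvPolynomial (Fin 2) k))
    (hI : I = Ideal.span {X 0 ^ m, X 1 ^ n}) : LinearIndependent k (mon I m n) := by
  rw [Fintype.linearIndependent_iff]
  intro g hg q
  have h1 : Ideal.Quotient.mk I (∑ q : Fin m × Fin n, monomial (expo q.1 q.2) (g q)) = 0 := by
    rw [← hg, map_sum]
    refine Finset.sum_congr rfl fun q _ => ?_
    rw [mon, ← Ideal.Quotient.mkₐ_eq_mk k, ← map_smul, smul_monomial, smul_eq_mul, mul_one]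
  rw [Ideal.Quotient.eq_zero_iff_mem, hI, mem_ideal_iff] at h1
  have h2 := h1 (expo q.1 q.2) (by simp) (by simp)
  rw [coeff_sum, Finset.sum_eq_single q] at h2
  · simpa using h2
  · intro q' _ hne
    rw [coeff_monomial, if_neg]
    intro he
    apply hne
    have a := DFunLike.congr_fun he 0
    have b := DFunLike.congr_fun he 1
    simp only [expo_zero, expo_one] at a b
    exact Prod.ext (Fin.ext a) (Fin.ext b)
  · simp

lemma mk_monomial_mem {k : Type*} [Field k] (m n : ℕ) (I : Ideal (MvPolynomial (Fin 2) k))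
    (hI : I = Ideal.span {X 0 ^ m, X 1 ^ n}) (e : Fin 2 →₀ ℕ) (c : k) :
    Ideal.Quotient.mk I (monomial e c) ∈
      Submodule.span k (mon I m n '' {q | (q.1 : ℕ) + q.2 = e 0 + e 1}) := by
  by_cases h : e 0 < m ∧ e 1 < n
  · have : Ideal.Quotient.mk I (monomial e c) = c • mon I m n (⟨e 0, h.1⟩, ⟨e 1, h.2⟩) := by
      rw [mon, ← Ideal.Quotient.mkₐ_eq_mk k, ← map_smul, smul_monomial, smul_eq_mul, mul_one,
        ← eq_expo]
    rw [this]
    exact Submodule.smul_mem _ _ (Submodule.subset_span ⟨_, rfl, rfl⟩)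
  · have : Ideal.Quotient.mk I (monomial e c) = 0 := by
      rw [Ideal.Quotient.eq_zero_iff_mem, hI, mem_ideal_iff]
      intro e' h0 h1
      rw [coeff_monomial, if_neg]
      rintro rfl
      exact h ⟨h0, h1⟩
    rw [this]
    exact Submodule.zero_mem _

lemma mon_span {k : Type*} [Field k] (m n : ℕ) (I : Ideal (MvPolynomial (Fin 2) k))
    (hI : I = Ideal.span {X 0 ^ m, X 1 ^ n}) : Submodule.span k (Set.range (mon I m n)) = ⊤ := by
  rw [eq_top_iff]
  rintro a -
  obtain ⟨f, rfl⟩ := Ideal.Quotient.mk_surjective a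
  rw [f.as_sum, map_sum]
  exact Submodule.sum_mem _ fun e _ => Submodule.span_mono (Set.image_subset_range _ _)
    (mk_monomial_mem m n I hI e _)

lemma graded_eq_span {k : Type*} [Field k] (m n : ℕ) (I : Ideal (MvPolynomial (Fin 2) k))
    (hI : I = Ideal.span {X 0 ^ m, X 1 ^ n}) (d : ℕ) :
    Submodule.span k ((Ideal.Quotient.mk I) '' {f | f.IsHomogeneous d}) =
      Submodule.span k (mon I m n '' {q | (q.1 : ℕ) + q.2 = d}) := by
  apply le_antisymm
  · rw [Submodule.span_le]
    rintro _ ⟨f, hf, rfl⟩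
    rw [f.as_sum, map_sum]
    refine Submodule.sum_mem _ fun e he => ?_
    have hdeg : e 0 + e 1 = d := by
      simpa [Finsupp.weight_apply, Finsupp.sum_fintype] using hf (mem_support_iff.1 he)
    rw [← hdeg]
    exact mk_monomial_mem m n I hI e _
  · apply Submodule.span_mono
    rintro _ ⟨q, hq, rfl⟩
    refine ⟨_, ?_, rfl⟩
    apply isHomogeneous_monomial
    rw [← hq, Finsupp.degree_eq_sum, Fin.sum_univ_two, expo_zero, expo_one]

lemma finrank_biSup_of_iSupIndep {k V : Type*} [Field k] [AddCommGroup V] [Module k V]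
    [FiniteDimensional k V] {p : ℕ → Submodule k V} (hp : iSupIndep p) (s : Finset ℕ) :
    Module.finrank k (⨆ i ∈ s, p i : Submodule k V) = ∑ i ∈ s, Module.finrank k (p i) := by
  induction s using Finset.induction_on with
  | empty => simp
  | insert a s ha ih =>
    rw [Finset.iSup_insert, Finset.sum_insert ha, ← ih]
    have hd : Disjoint (p a) (⨆ i ∈ s, p i) :=
      hp.disjoint_biSup (y := (s : Set ℕ)) (by simpa using ha)
    have := Submodule.finrank_sup_add_finrank_inf_eq (p a) (⨆ i ∈ s, p i)
    rw [hd.eq_bot, finrank_bot, add_zero] at this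
    exact this

/-- (Clebsch–Gordan)  Let `m ≤ n` be positive integers, `k` a field with
`char k = 0` or `char k > m + n − 1`, and `R(m,n) = k[x,y]/(x^m, y^n)` with the
standard grading.  Then
`H(R(m,n)) = (1, 2, …, m−1, m, …, m, m−1, …, 2, 1)` (i.e.
`H(R(m,n))_i = min (i+1) (min m (m+n-1-i))`), and the linear form `ℓ = x + y`
has Jordan type `P_ℓ = (n+m−1, n+m−3, …, n−m+1) = H(R(m,n))^∨`; in particular
`ℓ` is a strong Lefschetz element of `R(m,n)`. -/
theorem clebsch_gordan
    {k : Type} [Field k] (m n : ℕ) (hm : 0 < m) (hmn : m ≤ n)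
    (hchar : ringChar k = 0 ∨ m + n - 1 < ringChar k)
    (I : Ideal (MvPolynomial (Fin 2) k))
    (hI : I = Ideal.span {X 0 ^ m, X 1 ^ n})
    (𝒜 : ℕ → Submodule k (MvPolynomial (Fin 2) k ⧸ I))
    (h𝒜 : ∀ d : ℕ, 𝒜 d = Submodule.span k
      ((Ideal.Quotient.mk I) '' {f | f.IsHomogeneous d})) :
    (∀ i : ℕ, Module.finrank k (𝒜 i) = min (i + 1) (min m (m + n - 1 - i))) ∧
    IsJordanTypeOf (LinearMap.mulLeft k (Ideal.Quotient.mk I (X 0 + X 1)))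
      ((Multiset.range m).map (fun t => m + n - 1 - 2 * t)) ∧
    (Multiset.range m).map (fun t => m + n - 1 - 2 * t) =
      conjHilb (fun i => Module.finrank k (𝒜 i))
        (Module.finrank k (MvPolynomial (Fin 2) k ⧸ I)) ∧
    IsSL 𝒜 (Ideal.Quotient.mk I (X 0 + X 1)) := by
  have hs : ∀ d, 𝒜 d = Submodule.span k (mon I m n '' {q | (q.1 : ℕ) + q.2 = d}) := fun d => by
    rw [h𝒜, graded_eq_span m n I hI]
  have hli := mon_linearIndependent m n I hI
  have hspan := mon_span m n I hI
  let B := Module.Basis.mk hli hspan.ge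
  have : FiniteDimensional k (MvPolynomial (Fin 2) k ⧸ I) := B.finiteDimensional_of_finite
  have hdim : Module.finrank k (MvPolynomial (Fin 2) k ⧸ I) = m * n := by
    rw [Module.finrank_eq_card_basis B]; simp
  have hH : ∀ i : ℕ, Module.finrank k (𝒜 i) = min (i + 1) (min m (m + n - 1 - i)) := by
    intro i
    have hc := finrank_span_eq_card
      (hli.comp (Subtype.val : {q : Fin m × Fin n | (q.1 : ℕ) + q.2 = i} → _)
        Subtype.val_injective)
    rw [Set.range_comp, Subtype.range_coe] at hc
    rw [hs, ← card_fiber m n i hm hmn, hc]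
    simp [Fintype.card_subtype]
  have hind : iSupIndep 𝒜 := by
    intro i
    have : ⨆ j, ⨆ (_ : j ≠ i), 𝒜 j ≤
        Submodule.span k (mon I m n '' {q | (q.1 : ℕ) + q.2 ≠ i}) := by
      refine iSup₂_le fun j hj => ?_
      rw [hs]
      refine Submodule.span_mono (Set.image_mono ?_)
      rintro q rfl
      exact hj
    refine Disjoint.mono_right this ?_
    rw [hs]
    exact hli.disjoint_span_image (Set.disjoint_left.2 fun q h1 h2 => h2 h1)
  have htop : ⨆ i ∈ Finset.range (m + n), 𝒜 i = ⊤ := by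
    rw [eq_top_iff, ← hspan, Submodule.span_le]
    rintro _ ⟨q, rfl⟩
    refine Submodule.mem_iSup_of_mem ((q.1 : ℕ) + q.2) (Submodule.mem_iSup_of_mem ?_ ?_)
    · have := q.1.2; have := q.2.2; simp only [Finset.mem_range]; omega
    · rw [hs]; exact Submodule.subset_span ⟨q, rfl, rfl⟩
  have hrep : ∀ d, ∀ a ∈ 𝒜 d, ∃ f : MvPolynomial (Fin 2) k,
      f.IsHomogeneous d ∧ Ideal.Quotient.mk I f = a := by
    intro d a ha
    have h1 : 𝒜 d = (homogeneousSubmodule (Fin 2) k d).map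
        (Ideal.Quotient.mkₐ k I).toLinearMap := by
      rw [h𝒜, ← Submodule.span_eq (homogeneousSubmodule (Fin 2) k d), Submodule.map_span]
      rfl
    rw [h1] at ha
    obtain ⟨f, hf, rfl⟩ := ha
    exact ⟨f, hf, rfl⟩
  have hmem : ∀ d f, f.IsHomogeneous d → Ideal.Quotient.mk I f ∈ 𝒜 d := by
    intro d f hf
    rw [h𝒜]
    exact Submodule.subset_span ⟨f, hf, rfl⟩
  have hl1 : (X 0 + X 1 : MvPolynomial (Fin 2) k).IsHomogeneous 1 :=
    (isHomogeneous_X k (0 : Fin 2)).add (isHomogeneous_X k (1 : Fin 2))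
  set ℓ := Ideal.Quotient.mk I (X 0 + X 1) with hℓ
  have hmap : ∀ i j, (𝒜 i).map (LinearMap.mulLeft k (ℓ ^ j)) ≤ 𝒜 (i + j) := by
    rintro i j _ ⟨a, ha, rfl⟩
    obtain ⟨f, hf, rfl⟩ := hrep i a ha
    have := hmem _ _ ((hl1.pow j).mul hf)
    rw [one_mul, add_comm j i, map_mul, map_pow] at this
    exact this
  have hcast : ∀ t : ℕ, 0 < t → t ≤ m + n - 1 → (t : k) ≠ 0 := by
    intro t h0 ht h
    have hd := (ringChar.spec k t).1 h
    rcases hchar with hc | hc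
    · rw [hc, zero_dvd_iff] at hd; omega
    · have := Nat.le_of_dvd h0 hd; omega
  have hinj : ∀ i j, 2 * i + j + 2 ≤ m + n →
      Module.finrank k ((𝒜 i).map (LinearMap.mulLeft k (ℓ ^ j))) = Module.finrank k (𝒜 i) := by
    intro i j hij
    have hker : LinearMap.ker ((LinearMap.mulLeft k (ℓ ^ j)).domRestrict (𝒜 i)) = ⊥ := by
      rw [LinearMap.ker_eq_bot']
      rintro ⟨a, ha⟩ h0
      obtain ⟨f, hf, rfl⟩ := hrep i a ha
      have h1 : Ideal.Quotient.mk I ((X 0 + X 1) ^ j * f) = 0 := by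
        rw [map_mul, map_pow]; exact h0
      rw [Ideal.Quotient.eq_zero_iff_mem, hI] at h1
      have := form_key m n i j (fun t h h' => hcast t h (by omega)) hij f hf h1
      rw [← hI, ← Ideal.Quotient.eq_zero_iff_mem] at this
      exact Subtype.ext this
    rw [← LinearMap.range_domRestrict]
    exact LinearMap.finrank_range_of_inj (LinearMap.ker_eq_bot.1 hker)
  have hrank : ∀ i j : ℕ, Module.finrank k ((𝒜 i).map (LinearMap.mulLeft k (ℓ ^ j))) =
      min (Module.finrank k (𝒜 i)) (Module.finrank k (𝒜 (i + j))) := by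
    intro i j
    have hle1 := Submodule.finrank_map_le (LinearMap.mulLeft k (ℓ ^ j)) (𝒜 i)
    have hle2 := Submodule.finrank_mono (hmap i j)
    apply le_antisymm (le_min hle1 hle2)
    by_cases hij : 2 * i + j + 2 ≤ m + n
    · rw [hinj i j hij]; exact min_le_left _ _
    refine (min_le_right _ _).trans ?_
    by_cases hbig : m + n ≤ i + j + 1
    · rw [hH (i + j)]; omega
    -- With `s` the complementary degree `m + n - 2 - (i + j)`, the composite
    -- `A_s → A_i → A_{i + j}` is injective between spaces of equal dimension.
    obtain ⟨i', hi'⟩ : ∃ i', i' + (i + j) + 2 = m + n := ⟨m + n - 2 - (i + j), by omega⟩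
    obtain ⟨c, rfl⟩ : ∃ c, i = i' + c := ⟨i - i', by omega⟩
    have h1 := hinj i' (c + j) (by omega)
    have h2 : (𝒜 i').map (LinearMap.mulLeft k (ℓ ^ (c + j))) ≤
        (𝒜 (i' + c)).map (LinearMap.mulLeft k (ℓ ^ j)) := by
      rintro _ ⟨a, ha, rfl⟩
      refine ⟨_, hmap i' c ⟨a, ha, rfl⟩, ?_⟩
      simp only [LinearMap.mulLeft_apply]
      ring
    have h3 := Submodule.finrank_mono h2
    rw [h1, hH] at h3
    rw [hH]
    omega
  refine ⟨hH, ⟨?_, ?_⟩, ?_, ?_, hrank⟩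
  · intro p hp
    obtain ⟨t, ht, rfl⟩ := Multiset.mem_map.1 hp
    rw [Multiset.mem_range] at ht
    omega
  · intro j
    have hpow : LinearMap.mulLeft k ℓ ^ j = LinearMap.mulLeft k (ℓ ^ j) :=
      LinearMap.pow_mulLeft _ _ _ _
    have hrange : LinearMap.range (LinearMap.mulLeft k ℓ ^ j) =
        ⨆ i ∈ Finset.range (m + n), (𝒜 i).map (LinearMap.mulLeft k (ℓ ^ j)) := by
      rw [hpow, LinearMap.range_eq_map, ← htop]
      simp only [Submodule.map_iSup]
    have hind' : iSupIndep fun i => (𝒜 i).map (LinearMap.mulLeft k (ℓ ^ j)) :=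
      (hind.comp (add_left_injective j)).mono fun i => hmap i j
    rw [hrange, finrank_biSup_of_iSupIndep hind']
    simp only [hrank, hH]
    rw [sum_rank, Multiset.map_map]
    rfl
  · have hcard : ∀ i, Set.ncard {d : ℕ | i + 1 ≤ Module.finrank k (𝒜 d)} =
        if i < m then m + n - 1 - 2 * i else 0 := by
      intro i
      have : {d : ℕ | i + 1 ≤ Module.finrank k (𝒜 d)} =
          ((if i < m then Finset.Ico i (m + n - 1 - i) else ∅ : Finset ℕ) : Set ℕ) := by
        ext d
        split_ifs <;> simp [hH] <;> omega
      rw [this, Set.ncard_coe_finset]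
      split_ifs
      · rw [Nat.card_Ico]; omega
      · simp
    obtain ⟨r, hr⟩ : ∃ r, m * n = m + r :=
      Nat.exists_eq_add_of_le (Nat.le_mul_of_pos_right m (by omega))
    rw [conjHilb, hdim, hr, Multiset.range_add, Multiset.map_add, Multiset.filter_add]
    simp only [hcard]
    rw [Multiset.filter_eq_self.2, Multiset.filter_eq_nil.2, add_zero]
    · exact Multiset.map_congr rfl fun i hi => by rw [if_pos (Multiset.mem_range.1 hi)]
    · intro a ha
      obtain ⟨t, ht, rfl⟩ := Multiset.mem_map.1 ha
      obtain ⟨s, _, rfl⟩ := Multiset.mem_map.1 ht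
      rw [if_neg (by omega)]
      exact lt_irrefl 0
    · intro a ha
      obtain ⟨t, ht, rfl⟩ := Multiset.mem_map.1 ha
      rw [Multiset.mem_range] at ht
      rw [if_pos ht]
      omega
  · exact hmem 1 _ hl1
end

section
/- Let A and B be (possibly non-standard) graded Artinian algebras over a field k with char k = 0 or char k > j_A + j_B. Suppose ℓ_A ∈ A_1 and ℓ_B ∈ B_1 have Jordan types P_{ℓ_A} = (p_1, …, p_r) and P_{ℓ_B} = (q_1, …, q_s). Then in the tensor product C = A ⊗_k B, the linear form ℓ_C = ℓ_A ⊗ 1 + 1 ⊗ ℓ_B has Jordan type equal to the multiset union over all pairs (i, j) of the partitions (p_i + q_j − 1, p_i + q_j − 3, …, |p_i − q_j| + 1). -/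
open TensorProduct

section

open Polynomial DirectSum

/-! ### A polynomial with a window of vanishing coefficients -/

/-- The injectivity of multiplication by `(x + y) ^ j` on forms of degree `s` modulo
`(x ^ p, y ^ q)`, dehomogenized at `y = 1`: the window consists of the exponents `a` for which
`x ^ a * y ^ (s + j - a)` survives in the quotient. -/
theorem poly_window {k : Type*} [Field k] {p q s j : ℕ} (hsp : s < p) (hsq : s < q)
    (h2 : 2 * s + j + 2 ≤ p + q) (hfac : ∀ a : ℕ, 0 < a → a ≤ s + j → (a : k) ≠ 0)
    (F : k[X]) (hF : F.natDegree ≤ s)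
    (hw : ∀ a, a ≤ s + j → a < p → s + j - a < q → ((X + 1) ^ j * F).coeff a = 0) : F = 0 := by
  set G := (X + 1) ^ j * F with hG
  -- The window starts at `n`; the truncated subtraction gives `n = 0` when no lower bound is needed.
  obtain ⟨n, hn⟩ : ∃ n, n = s + j + 1 - q := ⟨_, rfl⟩
  have hmon : ((X + 1 : k[X]) ^ j).Monic := by
    simpa using (monic_X_add_C (1 : k)).pow j
  have hdm : ∀ m, ((X + 1 : k[X]) ^ m).natDegree = m := by
    intro m
    have h := (monic_X_add_C (1 : k)).natDegree_pow m
    rwa [natDegree_X_add_C, mul_one, C_1] at h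
  have hGd : G.natDegree ≤ s + j := by
    refine natDegree_mul_le.trans ?_
    rw [hdm]; omega
  have hdvd1 : (X + 1 : k[X]) ^ (j - n) ∣ derivative^[n] G :=
    pow_sub_dvd_iterate_derivative_of_pow_dvd n (Dvd.intro _ rfl)
  have hdvd2 : (X : k[X]) ^ (p - n) ∣ derivative^[n] G := by
    rw [X_pow_dvd_iff]
    intro d hd
    rw [coeff_iterate_derivative]
    by_cases hds : d + n ≤ s + j
    · rw [hw (d + n) hds (by omega) (by omega), smul_zero]
    · rw [coeff_eq_zero_of_natDegree_lt (by omega), smul_zero]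
  have hcop : IsCoprime ((X : k[X]) ^ (p - n)) ((X + 1 : k[X]) ^ (j - n)) := by
    apply IsCoprime.pow
    exact ⟨-1, 1, by ring⟩
  have hD : derivative^[n] G = 0 := by
    refine eq_zero_of_dvd_of_natDegree_lt (hcop.mul_dvd hdvd2 hdvd1) ?_
    rw [natDegree_mul (pow_ne_zero _ X_ne_zero) (by
      simpa using ((monic_X_add_C (1 : k)).pow (j - n)).ne_zero), natDegree_X_pow, hdm]
    refine (natDegree_iterate_derivative G n).trans_lt ?_
    omega
  have hG0 : G = 0 := by
    by_cases hG0 : G.natDegree < j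
    · exact eq_zero_of_dvd_of_natDegree_lt (Dvd.intro _ rfl) (by rwa [hdm])
    · by_contra hne
      have h1 := congrArg (fun P => P.coeff (G.natDegree - n)) hD
      simp only [coeff_iterate_derivative, coeff_zero, nsmul_eq_mul] at h1
      rw [Nat.sub_add_cancel (by omega)] at h1
      rcases mul_eq_zero.1 h1 with h | h
      · rw [Nat.descFactorial_eq_prod_range, Nat.cast_prod, Finset.prod_eq_zero_iff] at h
        obtain ⟨i, hi, h⟩ := h
        rw [Finset.mem_range] at hi
        exact hfac _ (by omega) (by omega) h
      · exact hne (leadingCoeff_eq_zero.1 h)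
  exact (mul_eq_zero.1 hG0).resolve_left hmon.ne_zero

/-! ### Counting -/

/-- The total rank of the `J`-th power for one pair of chains, by degree on the left and by Jordan
block on the right: both sides count the pairs `(t, d)` with `t < min p q`, `t ≤ d` and
`t + d + J + 2 ≤ p + q`. -/
theorem sum_min {p q J N : ℕ} (hN : p + q ≤ N) :
    ∑ d ∈ Finset.range N, min (d + 1) (min (p + q - 1 - (d + J)) (min p q))
      = ∑ t ∈ Finset.range (min p q), (p + q - 1 - 2 * t - J) := by
  have h1 : ∀ d ∈ Finset.range N, min (d + 1) (min (p + q - 1 - (d + J)) (min p q))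
      = ∑ t ∈ Finset.range (min p q), if t ≤ d ∧ t + d + J + 2 ≤ p + q then 1 else 0 := by
    intro d _
    rw [← Finset.card_filter]
    rw [show ((Finset.range (min p q)).filter fun t => t ≤ d ∧ t + d + J + 2 ≤ p + q)
      = Finset.range (min (d + 1) (min (p + q - 1 - (d + J)) (min p q))) by
        ext t; simp only [Finset.mem_filter, Finset.mem_range]; omega, Finset.card_range]
  rw [Finset.sum_congr rfl h1, Finset.sum_comm]
  refine Finset.sum_congr rfl fun t ht => ?_
  rw [← Finset.card_filter]
  rw [show ((Finset.range N).filter fun d => t ≤ d ∧ t + d + J + 2 ≤ p + q)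
      = Finset.Ico t (p + q - 1 - t - J) by
        ext d; simp only [Finset.mem_filter, Finset.mem_range, Finset.mem_Ico]; omega, Nat.card_Ico]
  omega

/-- The multiplicity of a positive part is a second difference of the rank function. -/
theorem sum_sub_count (P : Multiset ℕ) (m : ℕ) :
    (P.map (fun p => p - m)).sum + (P.map (fun p => p - (m + 2))).sum
      = 2 * (P.map (fun p => p - (m + 1))).sum + P.count (m + 1) := by
  induction P using Multiset.induction_on with
  | empty => simp
  | cons a P ih =>
    simp only [Multiset.map_cons, Multiset.sum_cons, Multiset.count_cons]
    split_ifs <;> omega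

/-- Two multisets with the same rank function have the same positive parts, hence the same sum of
any function vanishing at `0`. -/
theorem sum_congr_of_ranks {P Q : Multiset ℕ}
    (h : ∀ j, (P.map (fun p => p - j)).sum = (Q.map (fun p => p - j)).sum)
    (G : ℕ → ℕ) (hG : G 0 = 0) : (P.map G).sum = (Q.map G).sum := by
  have hf : P.filter (0 < ·) = Q.filter (0 < ·) := by
    ext m
    rw [Multiset.count_filter, Multiset.count_filter]
    rcases m with _ | m
    · simp
    · have h1 := sum_sub_count P m
      have h2 := sum_sub_count Q m
      rw [h, h, h] at h1
      simp only [Nat.zero_lt_succ, if_true]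
      omega
  have key : ∀ R : Multiset ℕ, (R.map G).sum = ((R.filter (0 < ·)).map G).sum := by
    intro R
    induction R using Multiset.induction_on with
    | empty => simp
    | cons a R ih =>
      rcases a with _ | a
      · simp [hG, ih]
      · simp [ih]
  rw [key P, key Q, hf]

/-! ### Ranks and independent families of subspaces -/

theorem finrank_iSup_of_indep {k V S : Type*} [Field k] [AddCommGroup V] [Module k V]
    [FiniteDimensional k V] [Fintype S] (W : S → Submodule k V) (hW : iSupIndep W) :
    Module.finrank k ↥(⨆ s, W s) = ∑ s, Module.finrank k (W s) := by
  classical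
  rw [Submodule.iSup_eq_range_dfinsupp_lsum,
    LinearMap.finrank_range_of_inj hW.dfinsupp_lsum_injective]
  exact Module.finrank_directSum (R := k) (fun s => W s)

theorem indep_fibres {k V I S : Type*} [Field k] [AddCommGroup V] [Module k V]
    {b : I → V} (hb : LinearIndependent k b) (c : I → S) :
    iSupIndep fun s => Submodule.span k (b '' (c ⁻¹' {s})) := by
  intro s
  refine (hb.disjoint_span_image (s := c ⁻¹' {s}) (t := c ⁻¹' {s}ᶜ) ?_).mono_right ?_
  · exact Disjoint.preimage c disjoint_compl_right
  · refine iSup₂_le fun t ht => Submodule.span_mono (Set.image_mono ?_)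
    exact Set.preimage_mono (by simpa using Ne.symm ht)

/-! ### Jordan chains -/

theorem exists_basis_quotient {k : Type*} [Field k] (n : ℕ) :
    ∃ e : Module.Basis (Fin n) k (k[X] ⧸ Submodule.span k[X] {(X : k[X]) ^ n}),
      ∀ a, e a = (X : k[X]) ^ (a : ℕ) • Submodule.Quotient.mk (1 : k[X]) := by
  let c : Module.Basis (Fin ((X : k[X]) ^ n).natDegree) k (AdjoinRoot ((X : k[X]) ^ n)) :=
    AdjoinRoot.powerBasisAux' (monic_X_pow (R := k) n)
  refine ⟨c.reindex (finCongr (natDegree_X_pow n)), fun a => ?_⟩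
  refine (Module.Basis.reindex_apply c _ a).trans ?_
  refine ((AdjoinRoot.powerBasis' (monic_X_pow (R := k) n)).basis_eq_pow _).trans ?_
  rw [← Submodule.Quotient.mk_smul, smul_eq_mul, mul_one]
  exact (map_pow (AdjoinRoot.mk ((X : k[X]) ^ n)) X a).symm

theorem dfinsupp_basis_apply {ι R : Type*} {M : ι → Type*} {η : ι → Type*} [Semiring R]
    [∀ i, AddCommMonoid (M i)] [∀ i, Module R (M i)] [DecidableEq ι]
    (b : ∀ i, Module.Basis (η i) R (M i)) (x : Σ i, η i) :
    DFinsupp.basis b x = DFinsupp.single x.1 (b x.1 x.2) := by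
  obtain ⟨i, x⟩ := x
  rw [Module.Basis.apply_eq_iff]
  ext ⟨j, y⟩
  change (b j).repr ((DFinsupp.single i (b i x) : Π₀ i, M i) j) y = _
  by_cases h : i = j
  · cases h
    simp [Finsupp.single_apply_left sigma_mk_injective]
  · simp_all

/-- A nilpotent endomorphism has a basis of Jordan chains `f ^ a (v i)`, `a < p i`. Empty chains
(`p i = 0`) are allowed. -/
theorem exists_jordan {k A : Type} [Field k] [AddCommGroup A] [Module k A] [FiniteDimensional k A]
    (f : A →ₗ[k] A) {n : ℕ} (hf : f ^ n = 0) :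
    ∃ (d : ℕ) (p : Fin d → ℕ) (v : Fin d → A) (b : Module.Basis (Σ i, Fin (p i)) k A),
      (∀ i, (f ^ p i) (v i) = 0) ∧ ∀ x, b x = (f ^ (x.2 : ℕ)) (v x.1) := by
  have htor : Module.IsTorsion' (Module.AEval' f) (Submonoid.powers (X : k[X])) := by
    intro x
    refine ⟨⟨X ^ n, n, rfl⟩, ?_⟩
    obtain ⟨a, rfl⟩ := (Module.AEval'.of f).surjective x
    change (X ^ n : k[X]) • (Module.AEval'.of f a) = 0
    rw [Module.AEval'.X_pow_smul_of, hf]; simp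
  obtain ⟨d, p, ⟨φ⟩⟩ := Module.torsion_by_prime_power_decomposition
    (irreducible_X : Irreducible (X : k[X])) htor
  choose e he using fun i => exists_basis_quotient (k := k) (p i)
  let E : Module.Basis (Σ i, Fin (p i)) k
      (⨁ i : Fin d, k[X] ⧸ Submodule.span k[X] {(X : k[X]) ^ p i}) :=
    DFinsupp.basis e
  let φ' : A ≃ₗ[k] (⨁ i : Fin d, k[X] ⧸ Submodule.span k[X] {(X : k[X]) ^ p i}) :=
    (Module.AEval'.of f).trans (φ.restrictScalars k)
  let one (i : Fin d) : ⨁ i : Fin d, k[X] ⧸ Submodule.span k[X] {(X : k[X]) ^ p i} :=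
    DirectSum.lof k[X] (Fin d) (fun i => k[X] ⧸ Submodule.span k[X] {(X : k[X]) ^ p i}) i
      (Submodule.Quotient.mk 1)
  have hpow : ∀ i m, (f ^ m) (φ'.symm (one i)) = φ'.symm ((X : k[X]) ^ m • one i) := by
    intro i m
    apply φ'.injective
    rw [LinearEquiv.apply_symm_apply]
    change φ (Module.AEval'.of f ((f ^ m) • (φ'.symm (one i)))) = _
    rw [← Module.AEval'.X_pow_smul_of, map_smul]
    congr 1
    exact φ'.apply_symm_apply (one i)
  refine ⟨d, p, fun i => φ'.symm (one i), E.map φ'.symm, fun i => ?_, fun x => ?_⟩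
  · rw [hpow, ← map_smul, ← Submodule.Quotient.mk_smul, smul_eq_mul, mul_one,
      (Submodule.Quotient.mk_eq_zero _).2 (Submodule.mem_span_singleton_self _), map_zero, map_zero]
  · rw [hpow, Module.Basis.map_apply]
    congr 1
    rw [← map_smul, ← he]
    exact dfinsupp_basis_apply e x

/-! ### The graded pieces attached to a pair of chains -/

/-- The vector `f ^ a v ⊗ g ^ b w`, playing the role of the monomial `x ^ a * y ^ b`. -/
noncomputable def bimonomial {k A B : Type*} [Field k] [AddCommGroup A] [Module k A] [AddCommGroup B]
    [Module k B] (f : A →ₗ[k] A) (g : B →ₗ[k] B) (v : A) (w : B) (a b : ℕ) : A ⊗[k] B :=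
  (f ^ a) v ⊗ₜ[k] (g ^ b) w

/-- The endomorphism `f ⊗ 1 + 1 ⊗ g` of `A ⊗ B`. -/
noncomputable def kronSum {k A B : Type*} [Field k] [AddCommGroup A] [Module k A] [AddCommGroup B]
    [Module k B] (f : A →ₗ[k] A) (g : B →ₗ[k] B) : (A ⊗[k] B) →ₗ[k] (A ⊗[k] B) :=
  TensorProduct.map f LinearMap.id + TensorProduct.map LinearMap.id g

/-- The exponents of the monomials `x ^ a * y ^ b` of degree `e` with `a < p` and `b < q`. -/
def box (p q e : ℕ) : Finset (ℕ × ℕ) :=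
  (Finset.range p ×ˢ Finset.range q).filter fun x => x.1 + x.2 = e

theorem card_box_le (p q e : ℕ) :
    (box p q e).card ≤ min (e + 1) (min (p + q - 1 - e) (min p q)) := by
  have h : box p q e ⊆ (Finset.Ico (e + 1 - q) (min p (e + 1))).image fun a => (a, e - a) := by
    rintro ⟨a, b⟩ hx
    simp only [box, Finset.mem_filter, Finset.mem_product, Finset.mem_range] at hx
    simp only [Finset.mem_image, Finset.mem_Ico, Prod.mk.injEq]
    exact ⟨a, by omega, rfl, by omega⟩
  refine ((Finset.card_le_card h).trans Finset.card_image_le).trans ?_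
  rw [Nat.card_Ico]
  omega

/-- The span of the vectors `f ^ a v ⊗ g ^ b w` with `a < p`, `b < q` and `a + b = e`. -/
noncomputable def gradedPiece {k A B : Type*} [Field k] [AddCommGroup A] [Module k A] [AddCommGroup B]
    [Module k B] (f : A →ₗ[k] A) (g : B →ₗ[k] B) (v : A) (w : B) (p q e : ℕ) :
    Submodule k (A ⊗[k] B) :=
  Submodule.span k ((fun x : ℕ × ℕ => bimonomial f g v w x.1 x.2) '' (box p q e : Set (ℕ × ℕ)))

section
variable {k A B : Type*} [Field k] [AddCommGroup A] [Module k A] [AddCommGroup B]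
    [Module k B] (f : A →ₗ[k] A) (g : B →ₗ[k] B) (v : A) (w : B)

theorem kronSum_bimonomial (a b : ℕ) :
    kronSum f g (bimonomial f g v w a b) = bimonomial f g v w (a + 1) b +
      bimonomial f g v w a (b + 1) := by
  simp [pow_succ', kronSum, bimonomial]

/-- Degree-`e` homogenization: sends `X ^ a` to `f ^ a v ⊗ g ^ (e - a) w` for `a ≤ e`, and to `0`
for `a > e`. -/
noncomputable def homog (e : ℕ) : k[X] →ₗ[k] (A ⊗[k] B) :=
  ∑ a ∈ Finset.range (e + 1), (Polynomial.lcoeff k a).smulRight (bimonomial f g v w a (e - a))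

theorem homog_apply (e : ℕ) (P : k[X]) :
    homog f g v w e P = ∑ a ∈ Finset.range (e + 1), P.coeff a • bimonomial f g v w a (e - a) := by
  simp [homog]

/-- Multiplication by `X + 1` dehomogenizes the action of `f ⊗ 1 + 1 ⊗ g`. -/
theorem homog_succ (e : ℕ) (P : k[X]) (hP : P.natDegree ≤ e) :
    homog f g v w (e + 1) ((X + 1) * P) = kronSum f g (homog f g v w e P) := by
  rw [homog_apply, homog_apply, map_sum]
  simp only [add_mul, one_mul, coeff_add, add_smul, Finset.sum_add_distrib, map_smul,
    kronSum_bimonomial, smul_add]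
  congr 1
  · rw [Finset.sum_range_succ']
    simp
  · rw [Finset.sum_range_succ, coeff_eq_zero_of_natDegree_lt (by omega), zero_smul, add_zero]
    refine Finset.sum_congr rfl fun a ha => ?_
    rw [Finset.mem_range] at ha
    rw [Nat.sub_add_comm (by omega)]

theorem homog_pow (e j : ℕ) (P : k[X]) (hP : P.natDegree ≤ e) :
    homog f g v w (e + j) ((X + 1) ^ j * P) = (kronSum f g ^ j) (homog f g v w e P) := by
  induction j with
  | zero => simp
  | succ j ih =>
    rw [pow_succ', mul_assoc, ← add_assoc, homog_succ, ih, pow_succ', Module.End.mul_apply]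
    refine natDegree_mul_le.trans ?_
    have : ((X + 1 : k[X]) ^ j).natDegree ≤ j := by
      refine natDegree_pow_le.trans ?_
      have := natDegree_X_add_C (1 : k)
      rw [C_1] at this
      simp [this]
    omega

variable {f g v w} {p q : ℕ}

theorem bimonomial_mem (hf : (f ^ p) v = 0) (hg : (g ^ q) w = 0)
    (a b : ℕ) : bimonomial f g v w a b ∈ gradedPiece f g v w p q (a + b) := by
  by_cases ha : a < p
  · by_cases hb : b < q
    · exact Submodule.subset_span ⟨(a, b), by simp [box, ha, hb], rfl⟩
    · rw [bimonomial, show b = (b - q) + q by omega, pow_add g, Module.End.mul_apply, hg]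
      simp
  · rw [bimonomial, show a = (a - p) + p by omega, pow_add f, Module.End.mul_apply, hf]
    simp

theorem kronSum_gradedPiece_le (hf : (f ^ p) v = 0) (hg : (g ^ q) w = 0)
    (e : ℕ) :
    (gradedPiece f g v w p q e).map (kronSum f g) ≤ gradedPiece f g v w p q (e + 1) := by
  rw [gradedPiece, Submodule.map_span, Submodule.span_le]
  rintro _ ⟨_, ⟨⟨a, b⟩, hx, rfl⟩, rfl⟩
  have hab : a + b = e := (Finset.mem_filter.1 hx).2
  subst hab
  simp only [kronSum_bimonomial]
  refine Submodule.add_mem _ ?_ ?_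
  · have := bimonomial_mem hf hg (a + 1) b
    rwa [show a + 1 + b = a + b + 1 by omega] at this
  · exact bimonomial_mem hf hg a (b + 1)

theorem kronSum_pow_gradedPiece_le (hf : (f ^ p) v = 0) (hg : (g ^ q) w = 0)
    (d j : ℕ) :
    (gradedPiece f g v w p q d).map (kronSum f g ^ j) ≤ gradedPiece f g v w p q (d + j) := by
  induction j with
  | zero => simp [Module.End.one_eq_id]
  | succ j ih =>
    rw [pow_succ', Module.End.mul_eq_comp, Submodule.map_comp]
    exact (Submodule.map_mono ih).trans (kronSum_gradedPiece_le hf hg _)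

theorem homog_mem (hf : (f ^ p) v = 0) (hg : (g ^ q) w = 0)
    (e : ℕ) (P : k[X]) : homog f g v w e P ∈ gradedPiece f g v w p q e := by
  rw [homog_apply]
  refine Submodule.sum_mem _ fun a ha => Submodule.smul_mem _ _ ?_
  have := bimonomial_mem hf hg a (e - a)
  rw [Finset.mem_range] at ha
  rwa [show a + (e - a) = e by omega] at this

theorem finrank_gradedPiece_le (e : ℕ) : Module.finrank k (gradedPiece f g v w p q e) ≤
    min (e + 1) (min (p + q - 1 - e) (min p q)) := by
  classical
  rw [gradedPiece, ← Finset.coe_image]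
  exact (finrank_span_finset_le_card _).trans (Finset.card_image_le.trans (card_box_le p q e))

theorem coeff_eq_zero_of_homog_eq_zero (hf : (f ^ p) v = 0) (hg : (g ^ q) w = 0)
    (hli : LinearIndependent k fun x : Fin p × Fin q => bimonomial f g v w x.1 x.2)
    {e : ℕ} {P : k[X]} (h : homog f g v w e P = 0) {a : ℕ} (hae : a ≤ e) (hap : a < p)
    (haq : e - a < q) : P.coeff a = 0 := by
  rw [Fintype.linearIndependent_iff] at hli
  have := hli (fun x => if (x.1 : ℕ) + x.2 = e then P.coeff x.1 else 0) ?_ (⟨a, hap⟩, ⟨e - a, haq⟩)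
  · simpa [hae] using this
  · rw [← h, homog_apply, Fintype.sum_prod_type]
    have h1 : ∀ c : ℕ, c ∈ Finset.range p →
        ∑ b ∈ Finset.range q, (if c + b = e then P.coeff c else 0) • bimonomial f g v w c b
        = if c ≤ e then P.coeff c • bimonomial f g v w c (e - c) else 0 := by
      intro c _
      split_ifs with hc
      · rw [Finset.sum_eq_single (e - c)]
        · rw [if_pos (by omega)]
        · intro b _ hb
          rw [if_neg (by omega), zero_smul]
        · intro hb
          rw [Finset.mem_range, not_lt] at hb
          rw [bimonomial, show e - c = (e - c - q) + q by omega, pow_add g, Module.End.mul_apply, hg]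
          simp
      · refine Finset.sum_eq_zero fun b _ => ?_
        rw [if_neg (by omega), zero_smul]
    have h2 : ∑ c ∈ Finset.range p, (∑ b ∈ Finset.range q,
        (if c + b = e then P.coeff c else 0) • bimonomial f g v w c b)
        = ∑ a ∈ Finset.range (e + 1), P.coeff a • bimonomial f g v w a (e - a) := by
      rw [Finset.sum_congr rfl h1, ← Finset.sum_filter]
      refine Finset.sum_subset_zero_on_sdiff ?_ ?_ fun _ _ => rfl
      · intro c; simp only [Finset.mem_filter, Finset.mem_range]; omega
      · intro c hc
        simp only [Finset.mem_sdiff, Finset.mem_filter, Finset.mem_range] at hc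
        rw [bimonomial, show c = (c - p) + p by omega, pow_add f, Module.End.mul_apply, hf]
        simp
    rw [← h2, ← Fin.sum_univ_eq_sum_range]
    refine Finset.sum_congr rfl fun c _ => ?_
    rw [← Fin.sum_univ_eq_sum_range]

/-- The strong Lefschetz property for a pair of Jordan chains: the powers of `f ⊗ 1 + 1 ⊗ g` have
maximal rank on each graded piece. -/
theorem finrank_map_gradedPiece (hf : (f ^ p) v = 0) (hg : (g ^ q) w = 0)
    [FiniteDimensional k A] [FiniteDimensional k B]
    (hli : LinearIndependent k fun x : Fin p × Fin q => bimonomial f g v w x.1 x.2)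
    (hfac : ∀ a : ℕ, 0 < a → a + 2 ≤ p + q → (a : k) ≠ 0) (d j : ℕ) :
    Module.finrank k ((gradedPiece f g v w p q d).map (kronSum f g ^ j)) =
      min (d + 1) (min (p + q - 1 - (d + j)) (min p q)) := by
  apply le_antisymm
  · have h1 := (Submodule.finrank_map_le (kronSum f g ^ j) (gradedPiece f g v w p q d)).trans
      (finrank_gradedPiece_le (f := f) (g := g) (v := v) (w := w) (p := p) (q := q) d)
    have h2 := (Submodule.finrank_mono (kronSum_pow_gradedPiece_le hf hg d j)).trans
      (finrank_gradedPiece_le (d + j))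
    omega
  · obtain ⟨m, hm⟩ : ∃ m, m = min (d + 1) (min (p + q - 1 - (d + j)) (min p q)) := ⟨_, rfl⟩
    rw [← hm]
    rcases m with _ | s
    · exact Nat.zero_le _
    -- Forms of degree `s`, multiplied by `(x + y) ^ (d + j - s)`, give an `(s + 1)`-dimensional
    -- subspace of the image; `d + j - s = j + (d - s)` puts it there.
    let T : degreeLT k (s + 1) →ₗ[k] (A ⊗[k] B) :=
      (homog f g v w (s + (d + j - s)) ∘ₗ LinearMap.mulLeft k ((X + 1 : k[X]) ^ (d + j - s))) ∘ₗ
        (degreeLT k (s + 1)).subtype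
    have hdeg : ∀ F : degreeLT k (s + 1), (F : k[X]).natDegree ≤ s := fun F =>
      natDegree_le_iff_coeff_eq_zero.2 fun N hN => coeff_eq_zero_of_degree_lt
        ((mem_degreeLT.1 F.2).trans_le (by exact_mod_cast hN))
    have hT : ∀ F : degreeLT k (s + 1), T F =
        homog f g v w (s + (d + j - s)) ((X + 1 : k[X]) ^ (d + j - s) * F) := fun F => rfl
    have hinj : Function.Injective T := by
      rw [injective_iff_map_eq_zero]
      intro F hF
      rw [hT] at hF
      apply Subtype.ext
      refine poly_window (p := p) (q := q) (s := s) (j := d + j - s) (by omega) (by omega) (by omega)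
        (fun a ha ha' => hfac a ha (by omega)) F (hdeg F) fun a h1 h2 h3 => ?_
      exact coeff_eq_zero_of_homog_eq_zero hf hg hli hF h1 h2 h3
    have hrange : LinearMap.range T ≤ (gradedPiece f g v w p q d).map (kronSum f g ^ j) := by
      rintro _ ⟨F, rfl⟩
      rw [hT, homog_pow _ _ _ _ _ _ _ (hdeg F), show d + j - s = j + (d - s) by omega, pow_add,
        Module.End.mul_apply, ← homog_pow _ _ _ _ _ _ _ (hdeg F)]
      refine Submodule.mem_map_of_mem ?_
      rw [show s + (d - s) = d by omega]
      exact homog_mem hf hg _ _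
    have h3 := Submodule.finrank_mono hrange
    rw [LinearMap.finrank_range_of_inj hinj, (degreeLTEquiv k (s + 1)).finrank_eq] at h3
    simpa using h3
end

/-! ### Ranks of powers -/

theorem finrank_range_pow {k A : Type*} [Field k] [AddCommGroup A] [Module k A]
    (f : A →ₗ[k] A) {d : ℕ} {p : Fin d → ℕ} {v : Fin d → A}
    (b : Module.Basis (Σ i, Fin (p i)) k A) (hv : ∀ i, (f ^ p i) (v i) = 0)
    (hb : ∀ x, b x = (f ^ (x.2 : ℕ)) (v x.1)) (J : ℕ) :
    Module.finrank k (LinearMap.range (f ^ J)) = ∑ i, (p i - J) := by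
  classical
  let S : Finset (Σ i, Fin (p i)) := Finset.univ.filter fun x => J ≤ x.2
  have hr : LinearMap.range (f ^ J) = Submodule.span k (S.image b : Set A) := by
    apply le_antisymm
    · rw [LinearMap.range_eq_map, ← b.span_eq, Submodule.map_span, Submodule.span_le]
      rintro _ ⟨_, ⟨⟨i, a⟩, rfl⟩, rfl⟩
      rw [hb, ← Module.End.mul_apply, ← pow_add]
      by_cases h : J + a < p i
      · refine Submodule.subset_span ?_
        rw [Finset.coe_image]
        exact ⟨⟨i, ⟨J + a, h⟩⟩, by simp [S], hb _⟩
      · rw [show J + a = (J + a - p i) + p i by omega, pow_add, Module.End.mul_apply, hv, map_zero]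
        exact Submodule.zero_mem _
    · rw [Submodule.span_le, Finset.coe_image]
      rintro _ ⟨⟨i, a⟩, ha, rfl⟩
      have ha' : J ≤ a := by simpa [S] using ha
      rw [hb]
      refine ⟨(f ^ (a - J : ℕ)) (v i), ?_⟩
      rw [← Module.End.mul_apply, ← pow_add, Nat.add_sub_cancel' ha']
  rw [hr, finrank_span_finset_eq_card, Finset.card_image_of_injective _ b.injective,
    Finset.card_filter, ← Finset.univ_sigma_univ, Finset.sum_sigma]
  · refine Finset.sum_congr rfl fun i _ => ?_
    rw [Fin.sum_univ_eq_sum_range (fun a => if J ≤ a then 1 else 0) (p i), ← Finset.card_filter]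
    rw [show (Finset.range (p i)).filter (J ≤ ·) = Finset.Ico J (p i) by
      ext a; simp [and_comm], Nat.card_Ico]
  · have h := b.linearIndependent.linearIndepOn (s := (S : Set _))
    have h2 := h.id_image
    rw [← Finset.coe_image] at h2
    exact h2

theorem finrank_range_kronSum_pow {k A B : Type*} [Field k] [AddCommGroup A] [Module k A]
    [AddCommGroup B] [Module k B] [FiniteDimensional k A] [FiniteDimensional k B]
    (f : A →ₗ[k] A) (g : B →ₗ[k] B) {d d' : ℕ} {p : Fin d → ℕ} {v : Fin d → A}
    (b : Module.Basis (Σ i, Fin (p i)) k A) (hv : ∀ i, (f ^ p i) (v i) = 0)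
    (hb : ∀ x, b x = (f ^ (x.2 : ℕ)) (v x.1)) {q : Fin d' → ℕ} {w : Fin d' → B}
    (c : Module.Basis (Σ i, Fin (q i)) k B) (hw : ∀ i, (g ^ q i) (w i) = 0)
    (hc : ∀ x, c x = (g ^ (x.2 : ℕ)) (w x.1))
    (hfac : ∀ i j, ∀ a : ℕ, 0 < a → a + 2 ≤ p i + q j → (a : k) ≠ 0) (J : ℕ) :
    Module.finrank k (LinearMap.range (kronSum f g ^ J)) =
      ∑ i, ∑ j, ∑ t ∈ Finset.range (min (p i) (q j)), (p i + q j - 1 - 2 * t - J) := by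
  let β := b.tensorProduct c
  have hβ : ∀ x, β x = bimonomial f g (v x.1.1) (w x.2.1) x.1.2 x.2.2 := by
    intro x
    rw [Module.Basis.tensorProduct_apply', hb, hc, bimonomial]
  -- Pieces of degree at least `p i + q j - 1` vanish, so degrees below `N` suffice.
  obtain ⟨N, hN⟩ : ∃ N, ∀ i j, p i + q j ≤ N :=
    ⟨∑ i, p i + ∑ j, q j, fun i j => add_le_add
      (Finset.single_le_sum (fun _ _ => Nat.zero_le _) (Finset.mem_univ i))
      (Finset.single_le_sum (fun _ _ => Nat.zero_le _) (Finset.mem_univ j))⟩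
  let col : (Σ i, Fin (p i)) × (Σ j, Fin (q j)) → Fin d × Fin d' × ℕ :=
    fun x => (x.1.1, x.2.1, (x.1.2 : ℕ) + x.2.2)
  let G : Fin d × Fin d' × ℕ → Submodule k (A ⊗[k] B) := fun s =>
    gradedPiece f g (v s.1) (w s.2.1) (p s.1) (q s.2.1) s.2.2
  have hG : ∀ s, G s = Submodule.span k (β '' (col ⁻¹' {s})) := by
    rintro ⟨i, j, e⟩
    change Submodule.span k _ = _
    congr 1
    ext y
    constructor
    · rintro ⟨⟨a, a'⟩, hx, rfl⟩
      simp only [box, Finset.coe_filter, Finset.mem_product, Finset.mem_range,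
        Set.mem_ofPred_eq] at hx
      exact ⟨(⟨i, ⟨a, hx.1.1⟩⟩, ⟨j, ⟨a', hx.1.2⟩⟩), by simp [col, hx.2], hβ _⟩
    · rintro ⟨⟨⟨i', a⟩, ⟨j', a'⟩⟩, hx, rfl⟩
      simp only [col, Set.mem_preimage, Set.mem_singleton_iff, Prod.mk.injEq] at hx
      obtain ⟨rfl, rfl, rfl⟩ := hx
      exact ⟨(a, a'), by simp [box], (hβ (⟨i', a⟩, ⟨j', a'⟩)).symm⟩
  have hind : iSupIndep G := by
    rw [funext hG]
    exact indep_fibres β.linearIndependent col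
  let W : Fin d × Fin d' × Fin N → Submodule k (A ⊗[k] B) := fun s =>
    (G (s.1, s.2.1, s.2.2)).map (kronSum f g ^ J)
  have hWind : iSupIndep W := by
    let sh : Fin d × Fin d' × Fin N → Fin d × Fin d' × ℕ := fun s => (s.1, s.2.1, s.2.2 + J)
    have hsh : Function.Injective sh := by
      rintro ⟨i, j, e⟩ ⟨i', j', e'⟩ h
      simp only [sh, Prod.mk.injEq] at h
      obtain ⟨rfl, rfl, h⟩ := h
      have : e = e' := Fin.ext (by omega)
      rw [this]
    exact (hind.comp hsh).mono fun s => kronSum_pow_gradedPiece_le (hv s.1) (hw s.2.1) _ _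
  have hrange : LinearMap.range (kronSum f g ^ J) = ⨆ s, W s := by
    rw [← Submodule.map_iSup, LinearMap.range_eq_map]
    congr 1
    rw [eq_comm, eq_top_iff, ← β.span_eq, Submodule.span_le]
    rintro _ ⟨x, rfl⟩
    have hlt : (x.1.2 : ℕ) + x.2.2 < N := by
      have := hN x.1.1 x.2.1
      omega
    refine Submodule.mem_iSup_of_mem (x.1.1, x.2.1, ⟨(x.1.2 : ℕ) + x.2.2, hlt⟩) ?_
    rw [hG]
    exact Submodule.subset_span ⟨x, rfl, rfl⟩
  rw [hrange, finrank_iSup_of_indep W hWind, Fintype.sum_prod_type]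
  refine Finset.sum_congr rfl fun i _ => ?_
  rw [Fintype.sum_prod_type]
  refine Finset.sum_congr rfl fun j _ => ?_
  have hli : LinearIndependent k
      fun x : Fin (p i) × Fin (q j) => bimonomial f g (v i) (w j) x.1 x.2 := by
    let inc : Fin (p i) × Fin (q j) → (Σ i, Fin (p i)) × (Σ j, Fin (q j)) :=
      fun x => (⟨i, x.1⟩, ⟨j, x.2⟩)
    have hinc : Function.Injective inc := by
      rintro ⟨a, a'⟩ ⟨c, c'⟩ h
      simpa [inc] using h
    have hcomp : (fun x : Fin (p i) × Fin (q j) => bimonomial f g (v i) (w j) x.1 x.2)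
        = β ∘ inc := funext fun x => (hβ (inc x)).symm
    rw [hcomp]
    exact β.linearIndependent.comp inc hinc
  rw [← sum_min (hN i j), ← Fin.sum_univ_eq_sum_range]
  refine Finset.sum_congr rfl fun e _ => ?_
  exact finrank_map_gradedPiece (hv i) (hw j) hli (hfac i j) e J

/-! ### Graded algebras -/

theorem chain_length_le {k A : Type*} [Field k] [AddCommGroup A] [Module k A]
    (f : A →ₗ[k] A) {n d : ℕ} (hf : f ^ n = 0) {p : Fin d → ℕ} {v : Fin d → A}
    (b : Module.Basis (Σ i, Fin (p i)) k A)
    (hb : ∀ x, b x = (f ^ (x.2 : ℕ)) (v x.1)) (i : Fin d) : p i ≤ n := by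
  by_contra h
  apply b.ne_zero ⟨i, ⟨n, not_le.1 h⟩⟩
  rw [hb, hf, LinearMap.zero_apply]

theorem mulLeft_pow_eq_zero {k A : Type*} [Field k] [CommRing A] [Algebra k A]
    (𝒜 : ℕ → Submodule k A) [GradedAlgebra 𝒜] {j : ℕ} (hj : ∀ i, j < i → 𝒜 i = ⊥)
    {ℓ : A} (hℓ : ℓ ∈ 𝒜 1) : LinearMap.mulLeft k ℓ ^ (j + 1) = 0 := by
  have h := SetLike.pow_mem_graded (j + 1) hℓ
  rw [hj _ (by simp), Submodule.mem_bot] at h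
  rw [LinearMap.pow_mulLeft, h, LinearMap.mulLeft_zero_eq_zero]

end

/-- Let `A` and `B` be (possibly non-standard) graded Artinian algebras over a
field `k` with `char k = 0` or `char k > j_A + j_B`.  Suppose `ℓ_A ∈ A_1` and
`ℓ_B ∈ B_1` have Jordan types `P = (p_1, …, p_r)` and `Q = (q_1, …, q_s)`.
Then in the tensor product `C = A ⊗_k B`, the linear form
`ℓ_C = ℓ_A ⊗ 1 + 1 ⊗ ℓ_B` has Jordan type equal to the multiset union over all
pairs `(i, j)` of the partitions `(p_i + q_j − 1, p_i + q_j − 3, …, |p_i − q_j| + 1)`. -/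
theorem jordan_type_tensor_product
    {k A B : Type} [Field k] [CommRing A] [Algebra k A] [CommRing B] [Algebra k B]
    (𝒜 : ℕ → Submodule k A) [GradedAlgebra 𝒜] [FiniteDimensional k A]
    (hconnA : 𝒜 0 = Submodule.span k {(1 : A)})
    (ℬ : ℕ → Submodule k B) [GradedAlgebra ℬ] [FiniteDimensional k B]
    (hconnB : ℬ 0 = Submodule.span k {(1 : B)})
    (jA jB : ℕ) (hjA : 𝒜 jA ≠ ⊥) (hjA' : ∀ i, jA < i → 𝒜 i = ⊥)
    (hjB : ℬ jB ≠ ⊥) (hjB' : ∀ i, jB < i → ℬ i = ⊥)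
    (hchar : ringChar k = 0 ∨ jA + jB < ringChar k)
    (ℓA : A) (hℓA : ℓA ∈ 𝒜 1) (ℓB : B) (hℓB : ℓB ∈ ℬ 1)
    (P Q : Multiset ℕ)
    (hP : IsJordanTypeOf (LinearMap.mulLeft k ℓA) P)
    (hQ : IsJordanTypeOf (LinearMap.mulLeft k ℓB) Q) :
    IsJordanTypeOf
      (LinearMap.mulLeft k ((ℓA ⊗ₜ[k] (1 : B)) + ((1 : A) ⊗ₜ[k] ℓB)))
      (P.bind fun p => Q.bind fun q =>
        (Multiset.range (min p q)).map (fun t => p + q - 1 - 2 * t)) := by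
  have hfA := mulLeft_pow_eq_zero 𝒜 hjA' hℓA
  have hfB := mulLeft_pow_eq_zero ℬ hjB' hℓB
  obtain ⟨d, p, v, b, hv, hb⟩ := exists_jordan _ hfA
  obtain ⟨d', q, w, c, hw, hc⟩ := exists_jordan _ hfB
  have hL : LinearMap.mulLeft k ((ℓA ⊗ₜ[k] (1 : B)) + ((1 : A) ⊗ₜ[k] ℓB)) =
      kronSum (LinearMap.mulLeft k ℓA) (LinearMap.mulLeft k ℓB) := by
    ext x y
    simp [kronSum, add_mul]
  have hfac : ∀ i j, ∀ a : ℕ, 0 < a → a + 2 ≤ p i + q j → (a : k) ≠ 0 := by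
    intro i j a ha hle h0
    have h1 := chain_length_le _ hfA b hb i
    have h2 := chain_length_le _ hfB c hc j
    have hdvd := (ringChar.spec k a).1 h0
    rcases hchar with h | h
    · rw [h, zero_dvd_iff] at hdvd
      omega
    · have := Nat.le_of_dvd ha hdvd
      omega
  refine ⟨?_, fun J => ?_⟩
  · intro n hn
    simp only [Multiset.mem_bind, Multiset.mem_map, Multiset.mem_range] at hn
    obtain ⟨a, _, a', _, t, ht, rfl⟩ := hn
    omega
  · rw [hL, finrank_range_kronSum_pow _ _ b hv hb c hw hc hfac]
    have hPr : ∀ J, (P.map (fun p => p - J)).sum =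
        (((Finset.univ : Finset (Fin d)).val.map p).map (fun p => p - J)).sum := by
      intro J
      rw [← hP.2 J, finrank_range_pow _ b hv hb, Multiset.map_map]
      rfl
    have hQr : ∀ J, (Q.map (fun q => q - J)).sum =
        (((Finset.univ : Finset (Fin d')).val.map q).map (fun q => q - J)).sum := by
      intro J
      rw [← hQ.2 J, finrank_range_pow _ c hw hc, Multiset.map_map]
      rfl
    have hQs : ∀ a, (Q.map fun q => ∑ t ∈ Finset.range (min a q), (a + q - 1 - 2 * t - J)).sum
        = ∑ j, ∑ t ∈ Finset.range (min a (q j)), (a + q j - 1 - 2 * t - J) := by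
      intro a
      rw [sum_congr_of_ranks hQr _ (by simp), Multiset.map_map]
      rfl
    have hPs : (P.map fun a => ∑ j, ∑ t ∈ Finset.range (min a (q j)),
          (a + q j - 1 - 2 * t - J)).sum
        = ∑ i, ∑ j, ∑ t ∈ Finset.range (min (p i) (q j)), (p i + q j - 1 - 2 * t - J) := by
      rw [sum_congr_of_ranks hPr _ (by simp), Multiset.map_map]
      rfl
    rw [← hPs, Multiset.map_bind, Multiset.sum_bind]
    congr 1
    refine Multiset.map_congr rfl fun a _ => ?_
    rw [← hQs, Multiset.map_bind, Multiset.sum_bind]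
    congr 1
    refine Multiset.map_congr rfl fun a' _ => ?_
    rw [Multiset.map_map]
    rfl
end
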